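/- Let a ≥ b ≥ 0 be integers with n ≥ a+b, let a_0,…,a_b ∈ K, let Φ = Σ_{t=0}^{b} a_t·Φ_t : Λ^a⊗Λ^b → Λ^a⊗Λ^b, and let 0 ≤ i ≤ b. Then the cokernel of Φ is isomorphic as a G-module to the Schur module L_{(a+i,b−i)} if and only if (1) Σ_{t=0}^{i} a_t·c_t(a,b,i) = 0, and (2) Σ_{t=0}^{j} a_t·c_t(a,b,j) ≠ 0 for every j ∈ {0,…,b} with j ≠ i. -/

import Mathlib

open TensorProduct

set_option synthInstance.maxHeartbeats 1000000
set_option maxSynthPendingDepth 3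
set_option maxHeartbeats 1000000

noncomputable section

namespace MMS

variable (K : Type) [Field K] [CharZero K] (n : ℕ)

/-- `V = K^n`, the natural module of `G = GL(n,K)`. -/
abbrev V : Type := Fin n → K

/-- `Λ^p`, the `p`-th exterior power of `V`. -/
abbrev Lam (p : ℕ) : Type := ⋀[K]^p (V K n)

/-- The wedge `v_1 ∧ ⋯ ∧ v_p ∈ Λ^p`. -/
def wedge {p : ℕ} (v : Fin p → V K n) : Lam K n p :=
  ⟨ExteriorAlgebra.ιMulti K p v, ExteriorAlgebra.ιMulti_range K p (Set.mem_range_self v)⟩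

/-- Transport along an equality of degrees. -/
def ecast {p q : ℕ} (h : p = q) : Lam K n p ≃ₗ[K] Lam K n q :=
  h ▸ LinearEquiv.refl K (Lam K n p)

/-- `m` is the wedge multiplication map `Λ^p ⊗ Λ^q → Λ^{p+q}`. -/
def IsMulMap (p q : ℕ) (m : Lam K n p ⊗[K] Lam K n q →ₗ[K] Lam K n (p+q)) : Prop :=
  ∀ (v : Fin p → V K n) (w : Fin q → V K n),
    m (wedge K n v ⊗ₜ[K] wedge K n w) = wedge K n (Fin.append v w)

/-- The set of `(p,q)`-shuffles: permutations `σ` of `{1, …, p+q}` which are strictly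
increasing on the first `p` and on the last `q` indices. -/
def shuffles (p q : ℕ) : Finset (Equiv.Perm (Fin (p+q))) :=
  Finset.univ.filter (fun σ =>
    (∀ i j : Fin (p+q), i < j → (j : ℕ) < p → σ i < σ j) ∧
    (∀ i j : Fin (p+q), i < j → p ≤ (i : ℕ) → σ i < σ j))

/-- `D` is the component `Δ_{p,q} : Λ^{p+q} → Λ^p ⊗ Λ^q` of the comultiplication, i.e.
`Δ_{p,q}(v_1 ∧ ⋯ ∧ v_{p+q}) = Σ_σ sgn(σ) (v_{σ(1)} ∧ ⋯ ∧ v_{σ(p)}) ⊗ (v_{σ(p+1)} ∧ ⋯ ∧ v_{σ(p+q)})`,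
the sum being over all `(p,q)`-shuffles. -/
def IsComulMap (p q : ℕ) (D : Lam K n (p+q) →ₗ[K] Lam K n p ⊗[K] Lam K n q) : Prop :=
  ∀ v : Fin (p+q) → V K n,
    D (wedge K n v) =
      ∑ σ ∈ shuffles p q,
        (Equiv.Perm.sign σ : ℤ) •
          (wedge K n (fun i => v (σ (Fin.castAdd q i))) ⊗ₜ[K]
            wedge K n (fun i => v (σ (Fin.natAdd p i))))

variable (mf : ∀ p q : ℕ, Lam K n p ⊗[K] Lam K n q →ₗ[K] Lam K n (p+q))
variable (Df : ∀ p q : ℕ, Lam K n (p+q) →ₗ[K] Lam K n p ⊗[K] Lam K n q)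

/-- The map `δ_t = (m ⊗ 1) ∘ (1 ⊗ Δ_{t,b-t}) : Λ^a ⊗ Λ^b → Λ^{a+t} ⊗ Λ^{b-t}`. -/
def deltaMap (a b t : ℕ) (ht : t ≤ b) :
    Lam K n a ⊗[K] Lam K n b →ₗ[K] Lam K n (a+t) ⊗[K] Lam K n (b-t) :=
  (TensorProduct.map (mf a t) LinearMap.id)
    ∘ₗ (TensorProduct.assoc K (Lam K n a) (Lam K n t) (Lam K n (b-t))).symm.toLinearMap
    ∘ₗ (TensorProduct.map LinearMap.id
        ((Df t (b-t)) ∘ₗ (ecast K n (by omega : b = t + (b-t))).toLinearMap))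

/-- The map `θ_t = (1 ⊗ m) ∘ (Δ_{a-t,t} ⊗ 1) : Λ^a ⊗ Λ^b → Λ^{a-t} ⊗ Λ^{b+t}`. -/
def thetaMap (a b t : ℕ) (ht : t ≤ a) :
    Lam K n a ⊗[K] Lam K n b →ₗ[K] Lam K n (a-t) ⊗[K] Lam K n (b+t) :=
  (TensorProduct.map LinearMap.id
      ((ecast K n (by omega : t + b = b + t)).toLinearMap ∘ₗ mf t b))
    ∘ₗ (TensorProduct.assoc K (Lam K n (a-t)) (Lam K n t) (Lam K n b)).toLinearMap
    ∘ₗ (TensorProduct.map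
        ((Df (a-t) t) ∘ₗ (ecast K n (by omega : a = (a-t) + t)).toLinearMap) LinearMap.id)

/-- The map `Φ_t = θ_t ∘ δ_t : Λ^a ⊗ Λ^b → Λ^a ⊗ Λ^b`. -/
def PhiMap (a b t : ℕ) (hta : t ≤ a) (htb : t ≤ b) :
    Lam K n a ⊗[K] Lam K n b →ₗ[K] Lam K n a ⊗[K] Lam K n b :=
  (TensorProduct.congr (ecast K n (by omega : a + t - t = a))
      (ecast K n (by omega : b - t + t = b))).toLinearMap
    ∘ₗ thetaMap K n mf Df (a+t) (b-t) t (by omega)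
    ∘ₗ deltaMap K n mf Df a b t htb

/-- The map `Φ_t`, extended by `0` to all `t`. -/
def PhiMap' (a b t : ℕ) :
    Lam K n a ⊗[K] Lam K n b →ₗ[K] Lam K n a ⊗[K] Lam K n b :=
  if h : t ≤ a ∧ t ≤ b then PhiMap K n mf Df a b t h.1 h.2 else 0

/-- The map `θ_1 : Λ^{a+1} ⊗ Λ^{b-1} → Λ^a ⊗ Λ^b` (for `b ≥ 1`). -/
def theta1 (a b : ℕ) (hb : 1 ≤ b) :
    Lam K n (a+1) ⊗[K] Lam K n (b-1) →ₗ[K] Lam K n a ⊗[K] Lam K n b :=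
  (TensorProduct.congr (ecast K n (by omega : a + 1 - 1 = a))
      (ecast K n (by omega : b - 1 + 1 = b))).toLinearMap
    ∘ₗ thetaMap K n mf Df (a+1) (b-1) 1 (by omega)

/-- The submodule of relations defining the Schur module `L_{(a,b)}`: the image of
`θ_1` if `b ≥ 1`, and `0` if `b = 0`. -/
def schurRel (a b : ℕ) : Submodule K (Lam K n a ⊗[K] Lam K n b) :=
  if hb : 1 ≤ b then LinearMap.range (theta1 K n mf Df a b hb) else ⊥

/-- The Schur module `L_{(a,b)}`, realized as the cokernel of `θ_1` (in characteristic zero). -/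
abbrev SchurL (a b : ℕ) : Type :=
  (Lam K n a ⊗[K] Lam K n b) ⧸ schurRel K n mf Df a b

/-- The projection `π_{(a,b)} : Λ^a ⊗ Λ^b → L_{(a,b)}`. -/
def schurProj (a b : ℕ) : Lam K n a ⊗[K] Lam K n b →ₗ[K] SchurL K n mf Df a b :=
  (schurRel K n mf Df a b).mkQ

/-- The coefficient `c_t(a,b,i) = C(i,t)·C(a-b+t+i,t)`. -/
def cCoef (a b t i : ℕ) : ℕ := (i.choose t) * ((a-b+t+i).choose t)

/-- The group `G = GL(n,K)`. -/
abbrev GLn : Type := Matrix.GeneralLinearGroup (Fin n) K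

/-- `rho` is the family of natural actions of `G = GL(n,K)` on the exterior powers `Λ^p`
of the natural module `V = K^n`. -/
def IsExtAction (rho : ∀ p : ℕ, GLn K n → (Lam K n p →ₗ[K] Lam K n p)) : Prop :=
  ∀ (p : ℕ) (g : GLn K n) (v : Fin p → V K n),
    rho p g (wedge K n v) =
      wedge K n (fun i => Matrix.toLin' (g : Matrix (Fin n) (Fin n) K) (v i))

/-- The action of `g ∈ GL(n,K)` on `Λ^a ⊗ Λ^b`. -/
def rhoT (rho : ∀ p : ℕ, GLn K n → (Lam K n p →ₗ[K] Lam K n p)) (a b : ℕ) (g : GLn K n) :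
    Lam K n a ⊗[K] Lam K n b →ₗ[K] Lam K n a ⊗[K] Lam K n b :=
  TensorProduct.map (rho a g) (rho b g)

/-- The quotients `M₁ ⧸ N₁` and `M₂ ⧸ N₂` are isomorphic as representations, with respect
to the given actions `ρ₁, ρ₂` on `M₁` and `M₂` (which descend to the quotients). -/
def IsQuotIso {G' : Type} {M₁ M₂ : Type} [AddCommGroup M₁] [Module K M₁]
    [AddCommGroup M₂] [Module K M₂]
    (N₁ : Submodule K M₁) (N₂ : Submodule K M₂)
    (ρ₁ : G' → M₁ →ₗ[K] M₁) (ρ₂ : G' → M₂ →ₗ[K] M₂) : Prop :=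
  ∃ e : (M₁ ⧸ N₁) ≃ₗ[K] (M₂ ⧸ N₂),
    ∀ (g : G') (x : M₁) (y : M₂),
      e (Submodule.Quotient.mk x) = Submodule.Quotient.mk y →
      e (Submodule.Quotient.mk (ρ₁ g x)) = Submodule.Quotient.mk (ρ₂ g y)

/-- The "multiply in pairs" map
`(Λ^{p₁} ⊗ Λ^{q₁}) ⊗ (Λ^{p₂} ⊗ Λ^{q₂}) → Λ^{p₁+p₂} ⊗ Λ^{q₁+q₂}`. -/
def pairMul (p₁ q₁ p₂ q₂ : ℕ) :
    (Lam K n p₁ ⊗[K] Lam K n q₁) ⊗[K] (Lam K n p₂ ⊗[K] Lam K n q₂) →ₗ[K]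
      Lam K n (p₁+p₂) ⊗[K] Lam K n (q₁+q₂) :=
  (TensorProduct.map (mf p₁ p₂) (mf q₁ q₂))
    ∘ₗ (TensorProduct.tensorTensorTensorComm K (Lam K n p₁) (Lam K n q₁)
        (Lam K n p₂) (Lam K n q₂)).toLinearMap

/-- The map `φ_k = (m ⊗ m) ∘ (1 ⊗ τ ⊗ 1) ∘ (Δ_{a-k,k} ⊗ Δ_{k,b-k}) : Λ^a ⊗ Λ^b → Λ^a ⊗ Λ^b`. -/
def phiSmall (a b k : ℕ) (hka : k ≤ a) (hkb : k ≤ b) :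
    Lam K n a ⊗[K] Lam K n b →ₗ[K] Lam K n a ⊗[K] Lam K n b :=
  (TensorProduct.congr (ecast K n (by omega : (a-k) + k = a))
      (ecast K n (by omega : k + (b-k) = b))).toLinearMap
    ∘ₗ pairMul K n mf (a-k) k k (b-k)
    ∘ₗ (TensorProduct.map
        ((Df (a-k) k) ∘ₗ (ecast K n (by omega : a = (a-k) + k)).toLinearMap)
        ((Df k (b-k)) ∘ₗ (ecast K n (by omega : b = k + (b-k))).toLinearMap))

/-- The map `ψ_k = C(b,k)·1 - φ_k : Λ^a ⊗ Λ^b → Λ^a ⊗ Λ^b`. -/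
def psiSmall (a b k : ℕ) (hka : k ≤ a) (hkb : k ≤ b) :
    Lam K n a ⊗[K] Lam K n b →ₗ[K] Lam K n a ⊗[K] Lam K n b :=
  (Nat.choose b k : K) • LinearMap.id - phiSmall K n mf Df a b k hka hkb

/-- The map `β_k = (m ⊗ m) ∘ (1 ⊗ τ ⊗ 1) ∘ (Δ_{a-k,k} ⊗ 1 ⊗ 1) : Λ^a ⊗ (Λ^k ⊗ Λ^{b-k}) → Λ^a ⊗ Λ^b`. -/
def betaMap (a b k : ℕ) (hka : k ≤ a) (hkb : k ≤ b) :
    Lam K n a ⊗[K] (Lam K n k ⊗[K] Lam K n (b-k)) →ₗ[K] Lam K n a ⊗[K] Lam K n b :=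
  (TensorProduct.congr (ecast K n (by omega : (a-k) + k = a))
      (ecast K n (by omega : k + (b-k) = b))).toLinearMap
    ∘ₗ pairMul K n mf (a-k) k k (b-k)
    ∘ₗ (TensorProduct.map
        ((Df (a-k) k) ∘ₗ (ecast K n (by omega : a = (a-k) + k)).toLinearMap)
        LinearMap.id)

/-- The map `γ_k : Λ^a ⊗ (Λ^k ⊗ Λ^{b-k}) → Λ^a ⊗ Λ^b`,
`γ_k(x ⊗ y ⊗ z) = x ⊗ (y ∧ z) - β_k(x ⊗ y ⊗ z)`. -/
def gammaMap (a b k : ℕ) (hka : k ≤ a) (hkb : k ≤ b) :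
    Lam K n a ⊗[K] (Lam K n k ⊗[K] Lam K n (b-k)) →ₗ[K] Lam K n a ⊗[K] Lam K n b :=
  (TensorProduct.map LinearMap.id
      ((ecast K n (by omega : k + (b-k) = b)).toLinearMap ∘ₗ mf k (b-k)))
    - betaMap K n mf Df a b k hka hkb

/-- The quantity `d_k(a,b,t)` (for the given `i`), from Lemma 5.3 of the paper. -/
def dInt (a b k i t : ℕ) : ℤ :=
  1 - ∑ j ∈ Finset.Icc (i - min (b-k) i) t,
        (-1:ℤ)^j * ((a-k+j).choose (a-k) : ℤ) * ((b-k+t-i).choose (t-j) : ℤ)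

end MMS

/-!
Inside the tensor square of the exterior algebra, `⨁ Λ^p ⊗ Λ^q` carries an action of `sl₂` whose
raising and lowering operators `E` and `F` satisfy `t! δ_t = E^t` and `t! θ_t = F^t`. The
commutation relation gives `(t!)² Φ_t = ∏_{s<t} (Φ_1 - μ_s)` with `μ_j = j (a - b + 1 + j)`. Hence
`Φ` is a polynomial in `Φ_1`, its value at `μ_j` is `∑ a_t c_t(a,b,j)`, and
`∏_{j≤b} (Φ_1 - μ_j) = 0`. So the image of `Φ` is the intersection of the images of `Φ_1 - μ_j` over
those `j` at which this value vanishes. Since `δ_j` is surjective and intertwines `Φ_1 - μ_j` with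
`Φ_1`, the cokernel of `Φ_1 - μ_j` is `L_{(a+j,b-j)}`. It remains to see that the direct sum of a
set of these Schur modules is isomorphic to one of them only if the set consists of that one; this
is read off from the vectors fixed by the diagonal matrices `diag(1, …, 1, 2, …, 2)`.
-/

namespace MMS

open Equiv
open ExteriorAlgebra (ιMulti)
open CliffordAlgebra (contractLeft contractRight reverse)

section TensorSquare

variable {R M : Type*} [CommRing R] [AddCommGroup M] [Module R M]

variable (R M) in
/-- The tensor square of the exterior algebra of `M`, in which all the spaces `Λ^p ⊗ Λ^q` live, so
that maps which shift degrees can be composed without transport along equalities of degrees. -/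
abbrev TensorSq : Type _ := ExteriorAlgebra R M ⊗[R] ExteriorAlgebra R M

variable (R M) in
/-- The involution `x ⊗ y ↦ yᵀ ⊗ xᵀ` of the tensor square, where `ᵀ` reverses the order of
multiplication. It exchanges `raise` and `lower`. -/
def revSwap : TensorSq R M →ₗ[R] TensorSq R M :=
  TensorProduct.map reverse reverse ∘ₗ (TensorProduct.comm R _ _).toLinearMap

variable (R M) in
/-- The image of `Λ^p ⊗ Λ^q` in the tensor square. -/
def gradedPiece (p q : ℕ) : Submodule R (TensorSq R M) :=
  LinearMap.range (TensorProduct.mapIncl (⋀[R]^p M) (⋀[R]^q M))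

@[simp] theorem revSwap_tmul (x y : ExteriorAlgebra R M) :
    revSwap R M (x ⊗ₜ y) = reverse y ⊗ₜ reverse x := rfl

theorem revSwap_involutive : Function.Involutive (revSwap R M) := by
  refine LinearMap.congr_fun (f := revSwap R M ∘ₗ revSwap R M) (g := LinearMap.id) ?_
  ext x y
  simp

theorem reverse_ιMulti {p : ℕ} (v : Fin p → M) :
    reverse (ιMulti R p v) = ιMulti R p (v ∘ Fin.rev) := by
  rw [ExteriorAlgebra.ιMulti_apply, ExteriorAlgebra.ιMulti_apply]
  have h := CliffordAlgebra.reverse_prod_map_ι (Q := (0 : QuadraticForm R M)) (List.ofFn v)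
  rw [List.map_ofFn] at h
  refine h.trans (congrArg List.prod (List.ext_getElem (by simp) fun m _ _ => ?_))
  simp [Fin.rev, Nat.sub_sub, add_comm]

theorem ιMulti_mul_ι {p : ℕ} (v : Fin p → M) (x : M) :
    ιMulti R p v * ExteriorAlgebra.ι R x = ιMulti R (p + 1) (Fin.snoc (α := fun _ => M) v x) := by
  rw [← Fin.append_right_eq_snoc v fun _ : Fin 1 => x, ← ExteriorAlgebra.ιMulti_mul_ιMulti]
  simp [ExteriorAlgebra.ιMulti_succ_apply]

theorem gradedPiece_le_iff {p q : ℕ} {S : Submodule R (TensorSq R M)} :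
    gradedPiece R M p q ≤ S ↔
      ∀ (u : Fin p → M) (v : Fin q → M), ιMulti R p u ⊗ₜ ιMulti R q v ∈ S := by
  have h : gradedPiece R M p q =
      Submodule.map₂ (TensorProduct.mk R _ _) (⋀[R]^p M) (⋀[R]^q M) := by
    rw [gradedPiece, TensorProduct.range_mapIncl]
  rw [h, ← ExteriorAlgebra.ιMulti_span_fixedDegree, ← ExteriorAlgebra.ιMulti_span_fixedDegree,
    Submodule.map₂_span_span, Submodule.span_le, Set.image2_subset_iff]
  simp only [Set.forall_mem_range]
  rfl

theorem ιMulti_tmul_mem_gradedPiece {p q : ℕ} (u : Fin p → M) (v : Fin q → M) :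
    ιMulti R p u ⊗ₜ ιMulti R q v ∈ gradedPiece R M p q :=
  gradedPiece_le_iff.1 le_rfl u v

end TensorSquare

section RaiseLower

variable {R M ι : Type*} [CommRing R] [AddCommGroup M] [Module R M] [Fintype ι]

/-- The operator `x ⊗ y ↦ ∑ k, (x ∧ e_k) ⊗ (e_k^* ⌋ y)`, the raising operator of the `sl₂`-action
on the tensor square. Its divided powers are the maps `δ_t`. -/
def raise (e : Module.Basis ι R M) : TensorSq R M →ₗ[R] TensorSq R M :=
  ∑ k, TensorProduct.map (LinearMap.mulRight R (ExteriorAlgebra.ι R (e k)))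
    (contractLeft (e.coord k))

/-- The operator `x ⊗ y ↦ ∑ k, (x ⌊ e_k^*) ⊗ (e_k ∧ y)`, the lowering operator of the `sl₂`-action
on the tensor square. Its divided powers are the maps `θ_t`. -/
def lower (e : Module.Basis ι R M) : TensorSq R M →ₗ[R] TensorSq R M :=
  ∑ k, TensorProduct.map (contractRight.flip (e.coord k))
    (LinearMap.mulLeft R (ExteriorAlgebra.ι R (e k)))

variable (e : Module.Basis ι R M)

theorem raise_tmul (x y : ExteriorAlgebra R M) :
    raise e (x ⊗ₜ y) =
      ∑ k, (x * ExteriorAlgebra.ι R (e k)) ⊗ₜ contractLeft (e.coord k) y := by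
  simp [raise]

theorem lower_tmul (x y : ExteriorAlgebra R M) :
    lower e (x ⊗ₜ y) =
      ∑ k, contractRight x (e.coord k) ⊗ₜ (ExteriorAlgebra.ι R (e k) * y) := by
  simp [lower]

theorem revSwap_semiconj_raise_lower :
    Function.Semiconj (revSwap R M) (raise e) (lower e) := by
  refine LinearMap.congr_fun (f := revSwap R M ∘ₗ raise e) (g := lower e ∘ₗ revSwap R M) ?_
  ext x y
  simp [raise_tmul, lower_tmul, CliffordAlgebra.contractRight_eq]

theorem commute_raise_mulLeft (z : ExteriorAlgebra R M) :
    Commute (raise e) (TensorProduct.map (LinearMap.mulLeft R z) LinearMap.id) := by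
  refine TensorProduct.ext' fun x y => ?_
  simp [raise_tmul, mul_assoc]

theorem commute_lower_mulRight (z : ExteriorAlgebra R M) :
    Commute (lower e) (TensorProduct.map LinearMap.id (LinearMap.mulRight R z)) := by
  refine TensorProduct.ext' fun x y => ?_
  simp [lower_tmul, mul_assoc]

theorem sum_coord_smul_ι (v : M) :
    ∑ k, e.coord k v • ExteriorAlgebra.ι R (e k) = ExteriorAlgebra.ι R v := by
  conv_rhs => rw [← e.sum_repr v]
  simp only [map_sum, map_smul, Module.Basis.coord_apply]

theorem contractLeft_ιMulti (d : Module.Dual R M) {q : ℕ} (u : Fin (q + 1) → M) :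
    contractLeft d (ιMulti R (q + 1) u) =
      ∑ j : Fin (q + 1), (-1 : R) ^ (j : ℕ) • d (u j) • ιMulti R q (u ∘ j.succAbove) := by
  induction q with
  | zero =>
    rw [ExteriorAlgebra.ιMulti_succ_apply, CliffordAlgebra.contractLeft_ι_mul]
    simp [CliffordAlgebra.contractLeft_one]
  | succ q ih =>
    rw [ExteriorAlgebra.ιMulti_succ_apply, CliffordAlgebra.contractLeft_ι_mul, ih,
      Finset.mul_sum, sub_eq_add_neg, ← Finset.sum_neg_distrib, Fin.sum_univ_succ (n := q + 1)]
    congr 1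
    · simp [Matrix.vecTail, Function.comp_def]
    · refine Finset.sum_congr rfl fun j _ => ?_
      rw [ExteriorAlgebra.ιMulti_succ_apply]
      simp [Matrix.vecTail, Function.comp_def, pow_succ]

theorem raise_tmul_ιMulti_zero (x : ExteriorAlgebra R M) (u : Fin 0 → M) :
    raise e (x ⊗ₜ ιMulti R 0 u) = 0 := by
  simp [raise_tmul, CliffordAlgebra.contractLeft_one]

theorem raise_tmul_ιMulti (x : ExteriorAlgebra R M) {q : ℕ} (u : Fin (q + 1) → M) :
    raise e (x ⊗ₜ ιMulti R (q + 1) u) =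
      ∑ j : Fin (q + 1), (-1 : R) ^ (j : ℕ) •
        ((x * ExteriorAlgebra.ι R (u j)) ⊗ₜ ιMulti R q (u ∘ j.succAbove)) := by
  simp only [raise_tmul, contractLeft_ιMulti, TensorProduct.tmul_sum, TensorProduct.tmul_smul]
  rw [Finset.sum_comm]
  refine Finset.sum_congr rfl fun j _ => ?_
  rw [← Finset.smul_sum, ← sum_coord_smul_ι e (u j), Finset.mul_sum, TensorProduct.sum_tmul]
  simp [TensorProduct.smul_tmul']

theorem sum_ι_mul_contractLeft_ιMulti {q : ℕ} (u : Fin q → M) :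
    ∑ k, ExteriorAlgebra.ι R (e k) * contractLeft (e.coord k) (ιMulti R q u) =
      (q : R) • ιMulti R q u := by
  induction q with
  | zero => simp [CliffordAlgebra.contractLeft_one]
  | succ q ih =>
    set x := ιMulti R q (Matrix.vecTail u)
    have hswap (k : ι) : ExteriorAlgebra.ι R (e k) *
        (ExteriorAlgebra.ι R (u 0) * contractLeft (e.coord k) x) =
        -(ExteriorAlgebra.ι R (u 0) *
          (ExteriorAlgebra.ι R (e k) * contractLeft (e.coord k) x)) := by
      rw [← mul_assoc, eq_neg_of_add_eq_zero_left (ExteriorAlgebra.ι_add_mul_swap (e k) (u 0)),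
        neg_mul, mul_assoc]
    calc ∑ k, ExteriorAlgebra.ι R (e k) * contractLeft (e.coord k) (ιMulti R (q + 1) u)
        = (∑ k, e.coord k (u 0) • ExteriorAlgebra.ι R (e k)) * x +
          ExteriorAlgebra.ι R (u 0) *
            ∑ k, ExteriorAlgebra.ι R (e k) * contractLeft (e.coord k) x := by
          simp only [ExteriorAlgebra.ιMulti_succ_apply, CliffordAlgebra.contractLeft_ι_mul, mul_sub,
            hswap, mul_smul_comm, sub_neg_eq_add, Finset.sum_add_distrib, Finset.sum_mul,
            smul_mul_assoc, Finset.mul_sum, x]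
      _ = ((q + 1 : ℕ) : R) • ιMulti R (q + 1) u := by
          rw [sum_coord_smul_ι, ih, ExteriorAlgebra.ιMulti_succ_apply, Nat.cast_succ, add_smul,
            one_smul, mul_smul_comm, add_comm]

theorem sum_contractRight_ιMulti_mul_ι {p : ℕ} (u : Fin p → M) :
    ∑ k, contractRight (ιMulti R p u) (e.coord k) * ExteriorAlgebra.ι R (e k) =
      (p : R) • ιMulti R p u := by
  have h := congrArg reverse (sum_ι_mul_contractLeft_ιMulti e (u ∘ Fin.rev))
  rw [← reverse_ιMulti] at h
  simpa [CliffordAlgebra.reverse.map_mul, CliffordAlgebra.contractRight_eq] using h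

theorem raise_lower {p q : ℕ} {z : TensorSq R M} (hz : z ∈ gradedPiece R M p q) :
    raise e (lower e z) = lower e (raise e z) + ((p : R) - q) • z := by
  classical
  suffices gradedPiece R M p q ≤ LinearMap.eqLocus (raise e ∘ₗ lower e)
      (lower e ∘ₗ raise e + ((p : R) - q) • LinearMap.id) from this hz
  refine gradedPiece_le_iff.2 fun u v => ?_
  set x := ιMulti R p u
  set y := ιMulti R q v
  have hleft : ∑ l, ∑ k, (contractRight x (e.coord l) * ExteriorAlgebra.ι R (e k)) ⊗ₜ[R]
      (if l = k then y else 0) = (p : R) • x ⊗ₜ[R] y := by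
    simp only [TensorProduct.tmul_ite, Finset.sum_ite_eq, Finset.mem_univ, if_true]
    rw [← TensorProduct.sum_tmul, sum_contractRight_ιMulti_mul_ι, TensorProduct.smul_tmul']
  have hright : ∑ l, ∑ k, (if l = k then x else 0) ⊗ₜ[R]
      (ExteriorAlgebra.ι R (e k) * contractLeft (e.coord l) y) = (q : R) • x ⊗ₜ[R] y := by
    simp only [TensorProduct.ite_tmul, Finset.sum_ite_eq, Finset.mem_univ, if_true]
    rw [← TensorProduct.tmul_sum, sum_ι_mul_contractLeft_ιMulti, TensorProduct.tmul_smul]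
  simp only [LinearMap.mem_eqLocus, LinearMap.comp_apply, LinearMap.add_apply,
    LinearMap.smul_apply, LinearMap.id_apply, raise_tmul, lower_tmul, map_sum,
    CliffordAlgebra.contractLeft_ι_mul, CliffordAlgebra.contractRight_mul_ι,
    Module.Basis.coord_apply, Module.Basis.repr_self, Finsupp.single_apply, ite_smul, one_smul,
    zero_smul, TensorProduct.tmul_sub, TensorProduct.sub_tmul, Finset.sum_sub_distrib]
  rw [hleft, hright, Finset.sum_comm, sub_smul]
  abel

theorem revSwap_mem {p q : ℕ} {z : TensorSq R M} (hz : z ∈ gradedPiece R M p q) :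
    revSwap R M z ∈ gradedPiece R M q p := by
  suffices gradedPiece R M p q ≤ (gradedPiece R M q p).comap (revSwap R M) from this hz
  refine gradedPiece_le_iff.2 fun u v => ?_
  rw [Submodule.mem_comap, revSwap_tmul, reverse_ιMulti, reverse_ιMulti]
  exact ιMulti_tmul_mem_gradedPiece _ _

theorem raise_eq_zero {p : ℕ} {z : TensorSq R M} (hz : z ∈ gradedPiece R M p 0) :
    raise e z = 0 := by
  suffices gradedPiece R M p 0 ≤ LinearMap.ker (raise e) from this hz
  exact gradedPiece_le_iff.2 fun u v => raise_tmul_ιMulti_zero e _ v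

theorem raise_mem {p q : ℕ} {z : TensorSq R M} (hz : z ∈ gradedPiece R M p (q + 1)) :
    raise e z ∈ gradedPiece R M (p + 1) q := by
  suffices gradedPiece R M p (q + 1) ≤ (gradedPiece R M (p + 1) q).comap (raise e) from this hz
  refine gradedPiece_le_iff.2 fun u v => ?_
  rw [Submodule.mem_comap, raise_tmul_ιMulti]
  refine Submodule.sum_mem _ fun j _ => Submodule.smul_mem _ _ ?_
  rw [ιMulti_mul_ι]
  exact ιMulti_tmul_mem_gradedPiece _ _

theorem lower_mem {p q : ℕ} {z : TensorSq R M} (hz : z ∈ gradedPiece R M (p + 1) q) :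
    lower e z ∈ gradedPiece R M p (q + 1) := by
  rw [← revSwap_involutive z, ← (revSwap_semiconj_raise_lower e).eq]
  exact revSwap_mem (raise_mem e (revSwap_mem hz))

theorem raise_pow_mem {p q : ℕ} (t : ℕ) {z : TensorSq R M}
    (hz : z ∈ gradedPiece R M p (q + t)) : (raise e ^ t) z ∈ gradedPiece R M (p + t) q := by
  induction t generalizing q with
  | zero => exact hz
  | succ t ih =>
    rw [pow_succ', Module.End.mul_apply]
    exact raise_mem e (ih (q := q + 1) (by rwa [add_assoc, add_comm 1]))

theorem raise_pow_eq_zero {p q t : ℕ} (h : q < t) {z : TensorSq R M}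
    (hz : z ∈ gradedPiece R M p q) : (raise e ^ t) z = 0 := by
  obtain ⟨s, rfl⟩ := Nat.exists_eq_add_of_lt h
  have hq : (raise e ^ q) z ∈ gradedPiece R M (p + q) 0 := raise_pow_mem e q (by rwa [zero_add])
  rw [show q + s + 1 = s + (1 + q) by ring, pow_add, pow_add, pow_one]
  simp [raise_eq_zero e hq]

end RaiseLower

section Shuffles

/-- The homomorphism sending a pair of permutations to the permutation of `Fin (t + s)` which acts
by the first on the first `t` indices and by the second on the last `s` indices. -/
def blockPerm (t s : ℕ) : Perm (Fin t) × Perm (Fin s) →* Perm (Fin (t + s)) :=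
  finSumFinEquiv.permCongrHom.toMonoidHom.comp (Perm.sumCongrHom (Fin t) (Fin s))

variable {t s : ℕ}

theorem blockPerm_injective : Function.Injective (blockPerm t s) :=
  finSumFinEquiv.permCongrHom.injective.comp Perm.sumCongrHom_injective

@[simp] theorem blockPerm_castAdd (τ : Perm (Fin t) × Perm (Fin s)) (i : Fin t) :
    blockPerm t s τ (Fin.castAdd s i) = Fin.castAdd s (τ.1 i) := by
  simp [blockPerm, Equiv.permCongrHom, Equiv.permCongr_apply]

@[simp] theorem blockPerm_natAdd (τ : Perm (Fin t) × Perm (Fin s)) (i : Fin s) :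
    blockPerm t s τ (Fin.natAdd t i) = Fin.natAdd t (τ.2 i) := by
  simp [blockPerm, Equiv.permCongrHom, Equiv.permCongr_apply]

theorem sign_blockPerm (τ : Perm (Fin t) × Perm (Fin s)) :
    Perm.sign (blockPerm t s τ) = Perm.sign τ.1 * Perm.sign τ.2 := by
  rw [← Perm.sign_sumCongr, ← Perm.sign_permCongr finSumFinEquiv]
  rfl

theorem mem_shuffles_iff {σ : Perm (Fin (t + s))} :
    σ ∈ shuffles t s ↔ StrictMono (σ ∘ Fin.castAdd s) ∧ StrictMono (σ ∘ Fin.natAdd t) := by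
  simp only [shuffles, Finset.mem_filter, Finset.mem_univ, true_and]
  refine ⟨fun ⟨h₁, h₂⟩ => ⟨fun i j hij => h₁ _ _ hij (by simp),
    fun i j hij => h₂ _ _ (by simpa using hij) (by simp)⟩, fun ⟨h₁, h₂⟩ => ⟨?_, ?_⟩⟩
  · intro i j hij hj
    exact h₁ (show (⟨i, lt_trans hij hj⟩ : Fin t) < ⟨j, hj⟩ from hij)
  · intro i j hij hi
    have hj : t ≤ (j : ℕ) := hi.trans (Fin.val_fin_le.2 hij.le)
    rw [← Fin.natAdd_subNat_cast hi, ← Fin.natAdd_subNat_cast hj]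
    exact h₂ (Fin.lt_def.2 (Nat.sub_lt_sub_right hi hij))

theorem blockPerm_mul_injOn_shuffles :
    Set.InjOn (fun x : Perm (Fin (t + s)) × Perm (Fin t) × Perm (Fin s) =>
      x.1 * blockPerm t s x.2) (shuffles t s ×ˢ Set.univ) := by
  rintro ⟨σ, τ⟩ hσ ⟨ρ, υ⟩ hρ (h : σ * blockPerm t s τ = ρ * blockPerm t s υ)
  obtain ⟨hσ₁, hσ₂⟩ := mem_shuffles_iff.1 hσ.1
  obtain ⟨hρ₁, hρ₂⟩ := mem_shuffles_iff.1 hρ.1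
  have hfst : σ ∘ Fin.castAdd s = ρ ∘ Fin.castAdd s := by
    refine (hσ₁.range_inj hρ₁).1 ?_
    rw [← τ.1.surjective.range_comp, ← υ.1.surjective.range_comp (ρ ∘ Fin.castAdd s)]
    refine congrArg Set.range (funext fun i => ?_)
    simpa using Perm.congr_fun h (Fin.castAdd s i)
  have hsnd : σ ∘ Fin.natAdd t = ρ ∘ Fin.natAdd t := by
    refine (hσ₂.range_inj hρ₂).1 ?_
    rw [← τ.2.surjective.range_comp, ← υ.2.surjective.range_comp (ρ ∘ Fin.natAdd t)]
    refine congrArg Set.range (funext fun i => ?_)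
    simpa using Perm.congr_fun h (Fin.natAdd t i)
  obtain rfl : σ = ρ := Equiv.ext fun i => Fin.addCases (congrFun hfst) (congrFun hsnd) i
  rw [blockPerm_injective (mul_left_cancel h)]

theorem exists_shuffle_mul_blockPerm (π : Perm (Fin (t + s))) :
    ∃ σ ∈ shuffles t s, ∃ τ, σ * blockPerm t s τ = π := by
  let τ : Perm (Fin t) × Perm (Fin s) :=
    (Tuple.sort (π ∘ Fin.castAdd s), Tuple.sort (π ∘ Fin.natAdd t))
  refine ⟨π * blockPerm t s τ, mem_shuffles_iff.2 ⟨?_, ?_⟩, τ⁻¹, by simp [mul_assoc]⟩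
  · refine Monotone.strictMono_of_injective ?_
      ((Equiv.injective _).comp (Fin.castAdd_injective _ _))
    simpa [τ, Function.comp_def] using Tuple.monotone_sort (π ∘ Fin.castAdd s)
  · refine Monotone.strictMono_of_injective ?_
      ((Equiv.injective _).comp (Fin.natAdd_injective _ _))
    simpa [τ, Function.comp_def] using Tuple.monotone_sort (π ∘ Fin.natAdd t)

theorem sum_perm_eq_sum_shuffles {A : Type*} [AddCommMonoid A] (f : Perm (Fin (t + s)) → A)
    (hf : ∀ σ τ, f (σ * blockPerm t s τ) = f σ) :
    ∑ σ, f σ = (t.factorial * s.factorial) • ∑ σ ∈ shuffles t s, f σ := by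
  calc ∑ σ, f σ
      = ∑ x ∈ shuffles t s ×ˢ (Finset.univ : Finset (Perm (Fin t) × Perm (Fin s))), f x.1 := by
        refine (Finset.sum_nbij (fun x : _ × _ × _ => x.1 * blockPerm t s x.2)
          (fun _ _ => Finset.mem_univ _) ?_ ?_ fun x _ => (hf _ _).symm).symm
        · simpa using blockPerm_mul_injOn_shuffles
        · intro π _
          obtain ⟨σ, hσ, τ, hπ⟩ := exists_shuffle_mul_blockPerm π
          exact ⟨(σ, τ), by simpa using hσ, hπ⟩
    _ = (t.factorial * s.factorial) • ∑ σ ∈ shuffles t s, f σ := by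
        rw [Finset.sum_product]
        simp [Finset.card_univ, Fintype.card_perm, ← Finset.smul_sum]

end Shuffles

section Comultiplication

variable {R M : Type*} [CommRing R] [AddCommGroup M] [Module R M] {b t s : ℕ}

variable (R) in
/-- The tensor `(v_1 ∧ ⋯ ∧ v_t) ⊗ (v_{t+1} ∧ ⋯ ∧ v_{t+s})`. The number of vectors is a separate
variable `b` so that the cut can be moved without changing the type of `v`. -/
def splitWedge (t s : ℕ) (h : t + s = b) (v : Fin b → M) : TensorSq R M :=
  ιMulti R t (fun i => v (Fin.cast h (Fin.castAdd s i))) ⊗ₜ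
    ιMulti R s (fun i => v (Fin.cast h (Fin.natAdd t i)))

variable (R) in
/-- The signed sum of the tensors `splitWedge` over all reorderings of the vectors, which is
`t! s!` times the corresponding sum over shuffles. -/
def altSplit (t s : ℕ) (h : t + s = b) (v : Fin b → M) : TensorSq R M :=
  ∑ σ : Perm (Fin b), (Perm.sign σ : ℤ) • splitWedge R t s h (v ∘ σ)

theorem splitWedge_zero_comp_perm (v : Fin b → M) (σ : Perm (Fin b)) :
    splitWedge R 0 b (zero_add b) (v ∘ σ) = (Perm.sign σ : ℤ) • 1 ⊗ₜ ιMulti R b v := by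
  have hcast (i : Fin b) : Fin.cast (zero_add b) (Fin.natAdd 0 i) = i := by ext; simp
  simp only [splitWedge, hcast, ExteriorAlgebra.ιMulti_zero_apply]
  rw [← TensorProduct.tmul_smul, ← Units.smul_def]
  exact congrArg _ ((ιMulti R b).map_perm v σ)

theorem altSplit_zero (v : Fin b → M) :
    altSplit R 0 b (zero_add b) v = (b.factorial : R) • (1 ⊗ₜ ιMulti R b v) := by
  simp [-zsmul_eq_mul, altSplit, splitWedge_zero_comp_perm, smul_smul, ← Units.val_mul,
    Fintype.card_perm, Nat.cast_smul_eq_nsmul]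

theorem splitWedge_comp_blockPerm (v : Fin (t + s) → M) (τ : Perm (Fin t) × Perm (Fin s)) :
    splitWedge R t s rfl (v ∘ blockPerm t s τ) =
      (Perm.sign (blockPerm t s τ) : ℤ) • splitWedge R t s rfl v := by
  have hfst := (ιMulti R t).map_perm (v ∘ Fin.castAdd s) τ.1
  have hsnd := (ιMulti R s).map_perm (v ∘ Fin.natAdd t) τ.2
  simp only [Function.comp_def] at hfst hsnd
  simp only [splitWedge, Fin.cast_refl, id_eq, Function.comp_apply, blockPerm_castAdd,
    blockPerm_natAdd, hfst, hsnd, sign_blockPerm, Units.val_mul, mul_smul, Units.smul_def,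
    TensorProduct.tmul_smul]
  rw [← TensorProduct.smul_tmul', smul_comm]

theorem altSplit_eq_sum_shuffles (v : Fin (t + s) → M) :
    altSplit R t s rfl v = ((t.factorial * s.factorial : ℕ) : R) •
      ∑ σ ∈ shuffles t s, (Perm.sign σ : ℤ) • splitWedge R t s rfl (v ∘ σ) := by
  rw [altSplit, Nat.cast_smul_eq_nsmul]
  refine sum_perm_eq_sum_shuffles _ fun σ τ => ?_
  rw [Perm.coe_mul, ← Function.comp_assoc, splitWedge_comp_blockPerm, smul_smul, Perm.sign_mul,
    Units.val_mul, mul_assoc, ← Units.val_mul, Int.units_mul_self, Units.val_one, mul_one]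

theorem revSwap_splitWedge (h : t + s = b) (h' : s + t = b) (v : Fin b → M) :
    revSwap R M (splitWedge R t s h v) = splitWedge R s t h' (v ∘ Fin.rev) := by
  subst h
  rw [splitWedge, revSwap_tmul, reverse_ιMulti, reverse_ιMulti, splitWedge]
  congr 2 <;> refine funext fun i => congrArg v (Fin.ext ?_) <;> simp <;> omega

theorem revSwap_altSplit (h : t + s = b) (h' : s + t = b) (v : Fin b → M) :
    revSwap R M (altSplit R t s h v) = altSplit R s t h' (v ∘ Fin.rev) := by
  rw [altSplit, altSplit, map_sum]
  refine Fintype.sum_equiv Fin.revPerm.permCongr _ _ fun σ => ?_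
  rw [map_zsmul, revSwap_splitWedge h h', Perm.sign_permCongr]
  congr 2
  funext i
  simp

variable {ι : Type*} [Fintype ι] (e : Module.Basis ι R M)

theorem raise_splitWedge (v : Fin (t + (s + 1)) → M) :
    raise e (splitWedge R t (s + 1) rfl v) = ∑ j : Fin (s + 1),
      (Perm.sign (blockPerm t (s + 1) (1, j.cycleRange.symm)) : ℤ) •
        splitWedge R (t + 1) s (by omega) (v ∘ blockPerm t (s + 1) (1, j.cycleRange.symm)) := by
  rw [splitWedge, raise_tmul_ιMulti]
  refine Finset.sum_congr rfl fun j _ => ?_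
  have hsign : (Perm.sign (blockPerm t (s + 1) (1, j.cycleRange.symm)) : ℤ) =
      (-1) ^ (j : ℕ) := by
    simp [sign_blockPerm, Perm.sign_symm, Fin.sign_cycleRange]
  have hcast : ((-1 : R)) ^ (j : ℕ) = (((-1) ^ (j : ℕ) : ℤ) : R) := by push_cast; rfl
  rw [hsign, hcast, Int.cast_smul_eq_zsmul, ιMulti_mul_ι, splitWedge]
  congr 2
  · refine congrArg _ (funext fun i => ?_)
    induction i using Fin.lastCases with
    | last =>
      rw [Fin.snoc_last, Function.comp_apply,
        show Fin.cast _ (Fin.castAdd s (Fin.last t)) = Fin.natAdd t (0 : Fin (s + 1)) from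
          Fin.ext (by simp), blockPerm_natAdd, Fin.cycleRange_symm_zero]
      rfl
    | cast i =>
      rw [Fin.snoc_castSucc, Function.comp_apply,
        show Fin.cast _ (Fin.castAdd s i.castSucc) = Fin.castAdd (s + 1) i from
          Fin.ext (by simp), blockPerm_castAdd]
      rfl
  · refine congrArg _ (funext fun i => ?_)
    rw [Function.comp_apply, Function.comp_apply,
      show Fin.cast _ (Fin.natAdd (t + 1) i) = Fin.natAdd t i.succ from
        Fin.ext (by simp; omega), blockPerm_natAdd, Fin.cycleRange_symm_succ]
    rfl

theorem raise_altSplit (h : t + (s + 1) = b) (h' : t + 1 + s = b) (v : Fin b → M) :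
    raise e (altSplit R t (s + 1) h v) = ((s + 1 : ℕ) : R) • altSplit R (t + 1) s h' v := by
  subst h
  have hreindex (ρ : Perm (Fin (t + (s + 1)))) :
      ∑ σ : Perm _, (Perm.sign σ : ℤ) • (Perm.sign ρ : ℤ) • splitWedge R (t + 1) s h' (v ∘ σ ∘ ρ) =
        altSplit R (t + 1) s h' v :=
    Fintype.sum_equiv (Equiv.mulRight ρ) _ _ fun σ => by
      simp [-zsmul_eq_mul, Perm.sign_mul, mul_smul]
  rw [altSplit, map_sum]
  simp only [map_zsmul, raise_splitWedge, Finset.smul_sum, Function.comp_assoc]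
  rw [Finset.sum_comm, Finset.sum_congr rfl fun _ _ => hreindex _, Finset.sum_const,
    Finset.card_univ, Fintype.card_fin, Nat.cast_smul_eq_nsmul]

end Comultiplication

section DividedPowers

variable {K M ι : Type*} [Field K] [CharZero K] [AddCommGroup M] [Module K M] [Fintype ι]
  (e : Module.Basis ι K M) {b t s : ℕ}

theorem factorial_smul_raise_pow_one_tmul (h : t + s = b) (v : Fin b → M) :
    (s.factorial : K) • (raise e ^ t) (1 ⊗ₜ ιMulti K b v) = altSplit K t s h v := by
  induction t generalizing s with
  | zero =>
    obtain rfl : s = b := by omega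
    simp [altSplit_zero]
  | succ t ih =>
    have hs : ((s + 1 : ℕ) : K) ≠ 0 := Nat.cast_ne_zero.2 s.succ_ne_zero
    refine smul_right_injective _ hs ?_
    simp only
    rw [smul_smul, ← Nat.cast_mul, ← Nat.factorial_succ, pow_succ', Module.End.mul_apply,
      ← map_smul, ih (by omega), raise_altSplit]

theorem factorial_smul_lower_pow_tmul_one (h : t + s = b) (v : Fin b → M) :
    (t.factorial : K) • (lower e ^ s) (ιMulti K b v ⊗ₜ 1) = altSplit K t s h v := by
  have hswap : revSwap K M (1 ⊗ₜ ιMulti K b (v ∘ Fin.rev)) = ιMulti K b v ⊗ₜ 1 := by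
    simp [reverse_ιMulti, Function.comp_assoc, Fin.rev_involutive.comp_self]
  have hpow := ((revSwap_semiconj_raise_lower e).iterate_right s).eq
  simp only [← Module.End.pow_apply] at hpow
  rw [← hswap, ← hpow, ← map_smul, factorial_smul_raise_pow_one_tmul e (by omega),
    revSwap_altSplit _ h, Function.comp_assoc, Fin.rev_involutive.comp_self, Function.comp_id]

theorem raise_pow_one_tmul (v : Fin (t + s) → M) :
    (raise e ^ t) (1 ⊗ₜ ιMulti K (t + s) v) = (t.factorial : K) •
      ∑ σ ∈ shuffles t s, (Perm.sign σ : ℤ) • splitWedge K t s rfl (v ∘ σ) := by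
  refine smul_right_injective _ (Nat.cast_ne_zero.2 s.factorial_ne_zero : (s.factorial : K) ≠ 0) ?_
  simp only
  rw [factorial_smul_raise_pow_one_tmul e rfl, altSplit_eq_sum_shuffles, smul_smul, mul_comm,
    Nat.cast_mul]

theorem lower_pow_tmul_one (v : Fin (t + s) → M) :
    (lower e ^ s) (ιMulti K (t + s) v ⊗ₜ 1) = (s.factorial : K) •
      ∑ σ ∈ shuffles t s, (Perm.sign σ : ℤ) • splitWedge K t s rfl (v ∘ σ) := by
  refine smul_right_injective _ (Nat.cast_ne_zero.2 t.factorial_ne_zero : (t.factorial : K) ≠ 0) ?_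
  simp only
  rw [factorial_smul_lower_pow_tmul_one e rfl, altSplit_eq_sum_shuffles, smul_smul, Nat.cast_mul]

end DividedPowers

section StructureMaps

variable {K : Type} [Field K] {n : ℕ}

theorem lam_hom_ext {p : ℕ} {A : Type*} [AddCommGroup A] [Module K A] {f g : Lam K n p →ₗ[K] A}
    (h : ∀ v, f (wedge K n v) = g (wedge K n v)) : f = g :=
  exteriorPower.linearMap_ext (AlternatingMap.ext h)

variable (K n) in
/-- The embedding of `Λ^p ⊗ Λ^q` into the tensor square of the exterior algebra. -/
abbrev incl (p q : ℕ) : Lam K n p ⊗[K] Lam K n q →ₗ[K] TensorSq K (V K n) :=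
  TensorProduct.mapIncl _ _

theorem incl_mem {p q : ℕ} (x : Lam K n p ⊗[K] Lam K n q) :
    incl K n p q x ∈ gradedPiece K (V K n) p q :=
  LinearMap.mem_range_self _ x

theorem incl_injective (p q : ℕ) : Function.Injective (incl K n p q) :=
  TensorProduct.map_injective_of_flat_flat _ _ Subtype.val_injective Subtype.val_injective

@[simp] theorem coe_wedge {p : ℕ} (v : Fin p → V K n) :
    (wedge K n v : ExteriorAlgebra K (V K n)) = ExteriorAlgebra.ιMulti K p v := rfl

@[simp] theorem coe_ecast {p q : ℕ} (h : p = q) (x : Lam K n p) :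
    (ecast K n h x : ExteriorAlgebra K (V K n)) = x := by
  subst h
  rfl

theorem incl_congr_ecast {p q p' q' : ℕ} (hp : p = p') (hq : q = q')
    (x : Lam K n p ⊗[K] Lam K n q) :
    incl K n p' q' (TensorProduct.congr (ecast K n hp) (ecast K n hq) x) = incl K n p q x := by
  subst hp hq
  exact congrArg _ (LinearMap.congr_fun TensorProduct.map_id x)

theorem coe_mul {p q : ℕ} {m : Lam K n p ⊗[K] Lam K n q →ₗ[K] Lam K n (p + q)}
    (hm : IsMulMap K n p q m) (x : Lam K n p) (y : Lam K n q) :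
    (m (x ⊗ₜ y) : ExteriorAlgebra K (V K n)) = x * y := by
  have h : (TensorProduct.mk K _ _).compr₂ (Submodule.subtype _ ∘ₗ m) =
      (LinearMap.mul K (ExteriorAlgebra K (V K n))).compl₁₂ (⋀[K]^p (V K n)).subtype
        (⋀[K]^q (V K n)).subtype := by
    refine lam_hom_ext fun v => lam_hom_ext fun w => ?_
    simp [hm v w, ExteriorAlgebra.ιMulti_mul_ιMulti]
  exact LinearMap.congr_fun₂ h x y

theorem incl_comul_wedge {t s : ℕ} {D : Lam K n (t + s) →ₗ[K] Lam K n t ⊗[K] Lam K n s}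
    (hD : IsComulMap K n t s D) (v : Fin (t + s) → V K n) :
    incl K n t s (D (wedge K n v)) =
      ∑ σ ∈ shuffles t s, (Equiv.Perm.sign σ : ℤ) • splitWedge K t s rfl (v ∘ σ) := by
  simp only [hD v, map_sum, map_zsmul]
  rfl

variable [CharZero K] {ι : Type*} [Fintype ι] (e : Module.Basis ι K (V K n))

theorem factorial_smul_incl_comul_eq_raise {t s : ℕ}
    {D : Lam K n (t + s) →ₗ[K] Lam K n t ⊗[K] Lam K n s} (hD : IsComulMap K n t s D)
    (y : Lam K n (t + s)) :
    (t.factorial : K) • incl K n t s (D y) = (raise e ^ t) (1 ⊗ₜ y) := by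
  refine LinearMap.congr_fun (f := (t.factorial : K) • incl K n t s ∘ₗ D)
    (g := (raise e ^ t) ∘ₗ TensorProduct.mk K _ _ 1 ∘ₗ Submodule.subtype _)
    (lam_hom_ext fun v => ?_) y
  simp [-zsmul_eq_mul, incl_comul_wedge hD, raise_pow_one_tmul]

theorem factorial_smul_incl_comul_eq_lower {t s : ℕ}
    {D : Lam K n (t + s) →ₗ[K] Lam K n t ⊗[K] Lam K n s} (hD : IsComulMap K n t s D)
    (y : Lam K n (t + s)) :
    (s.factorial : K) • incl K n t s (D y) = (lower e ^ s) (y ⊗ₜ 1) := by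
  refine LinearMap.congr_fun (f := (s.factorial : K) • incl K n t s ∘ₗ D)
    (g := (lower e ^ s) ∘ₗ (TensorProduct.mk K _ _).flip 1 ∘ₗ Submodule.subtype _)
    (lam_hom_ext fun v => ?_) y
  simp [-zsmul_eq_mul, incl_comul_wedge hD, lower_pow_tmul_one]

variable {mf : ∀ p q : ℕ, Lam K n p ⊗[K] Lam K n q →ₗ[K] Lam K n (p + q)}
  {Df : ∀ p q : ℕ, Lam K n (p + q) →ₗ[K] Lam K n p ⊗[K] Lam K n q}
  (hmf : ∀ p q, IsMulMap K n p q (mf p q)) (hDf : ∀ p q, IsComulMap K n p q (Df p q))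
include hmf hDf

theorem factorial_smul_incl_deltaMap {a b t : ℕ} (ht : t ≤ b) (x : Lam K n a ⊗[K] Lam K n b) :
    (t.factorial : K) • incl K n (a + t) (b - t) (deltaMap K n mf Df a b t ht x) =
      (raise e ^ t) (incl K n a b x) := by
  refine LinearMap.congr_fun (f := (t.factorial : K) • incl K n _ _ ∘ₗ deltaMap K n mf Df a b t ht)
    (g := (raise e ^ t) ∘ₗ incl K n a b) (TensorProduct.ext' fun x y => ?_) x
  let leftMul := TensorProduct.map (LinearMap.mulLeft K (x : ExteriorAlgebra K (V K n)))
    (LinearMap.id (M := ExteriorAlgebra K (V K n)))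
  have hmul (w : Lam K n t ⊗[K] Lam K n (b - t)) :
      incl K n (a + t) (b - t) (TensorProduct.map (mf a t) LinearMap.id
        ((TensorProduct.assoc K _ _ _).symm (x ⊗ₜ w))) = leftMul (incl K n _ _ w) := by
    induction w with
    | zero => simp
    | add w w' hw hw' => simp only [TensorProduct.tmul_add, map_add, hw, hw']
    | tmul w w' => simp [leftMul, coe_mul (hmf a t)]
  have hcomul := factorial_smul_incl_comul_eq_raise e (hDf t (b - t)) (ecast K n (by omega) y)
  have hcomm := LinearMap.congr_fun ((commute_raise_mulLeft e x).pow_left t).eq (1 ⊗ₜ y)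
  simp only [Module.End.mul_apply, TensorProduct.map_tmul, LinearMap.mulLeft_apply, mul_one,
    LinearMap.id_apply] at hcomm
  calc (t.factorial : K) • incl K n (a + t) (b - t) (deltaMap K n mf Df a b t ht (x ⊗ₜ y))
      = leftMul ((t.factorial : K) • incl K n _ _ (Df t (b - t) (ecast K n (by omega) y))) := by
        rw [map_smul, ← hmul]
        rfl
    _ = (raise e ^ t) (incl K n a b (x ⊗ₜ y)) := by
        rw [hcomul, coe_ecast]
        exact hcomm.symm

theorem factorial_smul_incl_thetaMap {a b t : ℕ} (ht : t ≤ a) (x : Lam K n a ⊗[K] Lam K n b) :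
    (t.factorial : K) • incl K n (a - t) (b + t) (thetaMap K n mf Df a b t ht x) =
      (lower e ^ t) (incl K n a b x) := by
  refine LinearMap.congr_fun (f := (t.factorial : K) • incl K n _ _ ∘ₗ thetaMap K n mf Df a b t ht)
    (g := (lower e ^ t) ∘ₗ incl K n a b) (TensorProduct.ext' fun x y => ?_) x
  let rightMul := TensorProduct.map (LinearMap.id (M := ExteriorAlgebra K (V K n)))
    (LinearMap.mulRight K (y : ExteriorAlgebra K (V K n)))
  have hmul (w : Lam K n (a - t) ⊗[K] Lam K n t) :
      incl K n (a - t) (b + t) (TensorProduct.map LinearMap.id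
        ((ecast K n (by omega : t + b = b + t)).toLinearMap ∘ₗ mf t b)
        (TensorProduct.assoc K _ _ _ (w ⊗ₜ y))) = rightMul (incl K n _ _ w) := by
    induction w with
    | zero => simp
    | add w w' hw hw' => simp only [TensorProduct.add_tmul, map_add, hw, hw']
    | tmul w w' => simp [rightMul, coe_mul (hmf t b)]
  have hcomul := factorial_smul_incl_comul_eq_lower e (hDf (a - t) t) (ecast K n (by omega) x)
  have hcomm := LinearMap.congr_fun ((commute_lower_mulRight e y).pow_left t).eq (x ⊗ₜ 1)
  simp only [Module.End.mul_apply, TensorProduct.map_tmul, LinearMap.mulRight_apply, one_mul,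
    LinearMap.id_apply] at hcomm
  calc (t.factorial : K) • incl K n (a - t) (b + t) (thetaMap K n mf Df a b t ht (x ⊗ₜ y))
      = rightMul ((t.factorial : K) • incl K n _ _ (Df (a - t) t (ecast K n (by omega) x))) := by
        rw [map_smul, ← hmul]
        rfl
    _ = (lower e ^ t) (incl K n a b (x ⊗ₜ y)) := by
        rw [hcomul, coe_ecast]
        exact hcomm.symm

theorem factorial_sq_smul_incl_PhiMap {a b t : ℕ} (hta : t ≤ a) (htb : t ≤ b)
    (x : Lam K n a ⊗[K] Lam K n b) :
    ((t.factorial : K) ^ 2) • incl K n a b (PhiMap K n mf Df a b t hta htb x) =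
      (lower e ^ t) ((raise e ^ t) (incl K n a b x)) := by
  rw [PhiMap, LinearMap.comp_apply, LinearMap.comp_apply, LinearEquiv.coe_coe, incl_congr_ecast,
    pow_two, mul_smul, factorial_smul_incl_thetaMap e hmf hDf, ← map_smul,
    factorial_smul_incl_deltaMap e hmf hDf]

theorem incl_theta1 {p q : ℕ} (hq : 1 ≤ q) (x : Lam K n (p + 1) ⊗[K] Lam K n (q - 1)) :
    incl K n p q (theta1 K n mf Df p q hq x) = lower e (incl K n (p + 1) (q - 1) x) := by
  rw [theta1, LinearMap.comp_apply, LinearEquiv.coe_coe, incl_congr_ecast]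
  simpa using factorial_smul_incl_thetaMap e hmf hDf (show 1 ≤ p + 1 by omega) x

end StructureMaps

section Spectrum

variable {R M ι : Type*} [CommRing R] [AddCommGroup M] [Module R M] [Fintype ι]

variable (R) in
/-- The eigenvalues `j (a - b + 1 + j)`, for `0 ≤ j ≤ b`, of `lower ∘ raise` on `Λ^a ⊗ Λ^b`. -/
def eig (a b j : ℕ) : R := j * ((a : R) - b + 1 + j)

theorem eig_zero (a b : ℕ) : eig R a b 0 = 0 := by simp [eig]

theorem eig_sub_eig (a b j s : ℕ) :
    eig R a b j - eig R a b s = ((j : R) - s) * ((a : R) - b + 1 + j + s) := by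
  simp only [eig]
  ring

theorem eig_succ_left (p q j : ℕ) :
    eig R (p + 1) q j = eig R p (q + 1) (j + 1) - ((p + 1 : ℕ) - q) := by
  simp only [eig]
  push_cast
  ring

theorem eig_injective [IsDomain R] [CharZero R] {a b : ℕ} (h : b ≤ a + 1) :
    Function.Injective (eig R a b) := by
  intro j s hjs
  by_contra hne
  have hsum : ((a + 1 - b + j + s : ℕ) : R) = (a : R) - b + 1 + j + s := by
    push_cast [Nat.cast_sub h]
    ring
  have hprod := eig_sub_eig (R := R) a b j s
  rw [hjs, sub_self, ← hsum, zero_eq_mul, sub_eq_zero, Nat.cast_inj, Nat.cast_eq_zero] at hprod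
  omega

theorem prod_natCast_sub (j t : ℕ) :
    ∏ s ∈ Finset.range t, ((j : R) - s) = (t.factorial * j.choose t : ℕ) := by
  rw [← Nat.descFactorial_eq_factorial_mul_choose]
  induction t with
  | zero => simp
  | succ t ih =>
    rw [Finset.prod_range_succ, ih, Nat.descFactorial_succ]
    rcases lt_or_ge j t with hjt | hjt
    · simp [Nat.descFactorial_of_lt hjt]
    · rw [Nat.cast_mul, Nat.cast_sub hjt, mul_comm]

theorem prod_eig_sub_eig {a b : ℕ} (h : b ≤ a) (j t : ℕ) :
    ∏ s ∈ Finset.range t, (eig R a b j - eig R a b s) = (t.factorial : R) ^ 2 * cCoef a b t j := by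
  have hasc : ∏ s ∈ Finset.range t, ((a : R) - b + 1 + j + s) =
      (t.factorial * (a - b + t + j).choose t : ℕ) := by
    rw [show a - b + t + j = a - b + j + t by omega, ← Nat.ascFactorial_eq_factorial_mul_choose,
      Nat.ascFactorial_eq_prod_range, Nat.cast_prod]
    refine Finset.prod_congr rfl fun s _ => ?_
    push_cast [Nat.cast_sub h]
    ring
  simp only [eig_sub_eig, Finset.prod_mul_distrib, prod_natCast_sub, hasc, cCoef]
  push_cast
  ring

variable (e : Module.Basis ι R M)

theorem lower_raise_mem {p q : ℕ} {z : TensorSq R M} (hz : z ∈ gradedPiece R M p q) :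
    lower e (raise e z) ∈ gradedPiece R M p q := by
  cases q with
  | zero => simp [raise_eq_zero e hz]
  | succ q => exact lower_mem e (raise_mem e hz)

theorem lower_raise_pow_succ {a b : ℕ} (t : ℕ) {z : TensorSq R M}
    (hz : z ∈ gradedPiece R M a b) :
    lower e ((raise e ^ (t + 1)) z) = (raise e ^ t) (lower e (raise e z) - eig R a b t • z) := by
  induction t with
  | zero => simp [eig_zero]
  | succ t ih =>
    rcases lt_or_ge b (t + 1) with hbt | htb
    · rw [raise_pow_eq_zero e (hbt.trans (t + 1).lt_succ_self) hz, map_zero,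
        raise_pow_eq_zero e hbt (sub_mem (lower_raise_mem e hz) (Submodule.smul_mem _ _ hz))]
    · obtain ⟨q, rfl⟩ := Nat.exists_eq_add_of_le' htb
      have hcomm := raise_lower e (raise_pow_mem e (t + 1) hz)
      have heig : eig R a (q + (t + 1)) (t + 1) =
          eig R a (q + (t + 1)) t + (((a + (t + 1) : ℕ) : R) - q) := by
        simp only [eig]
        push_cast
        ring
      rw [ih, ← Module.End.mul_apply, ← pow_succ'] at hcomm
      rw [pow_succ', Module.End.mul_apply, eq_sub_of_add_eq hcomm.symm, ← map_smul, ← map_sub, heig,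
        add_smul, sub_sub]

theorem lower_pow_succ_raise_pow_succ {a b : ℕ} (t : ℕ) {z : TensorSq R M}
    (hz : z ∈ gradedPiece R M a b) :
    (lower e ^ (t + 1)) ((raise e ^ (t + 1)) z) =
      (lower e ^ t) ((raise e ^ t) (lower e (raise e z) - eig R a b t • z)) := by
  rw [pow_succ (lower e), Module.End.mul_apply, lower_raise_pow_succ e t hz]

theorem lower_pow_raise_pow_of_eq_smul {a b : ℕ} (t : ℕ) {z : TensorSq R M}
    (hz : z ∈ gradedPiece R M a b) {c : R} (hc : lower e (raise e z) = c • z) :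
    (lower e ^ t) ((raise e ^ t) z) = (∏ s ∈ Finset.range t, (c - eig R a b s)) • z := by
  induction t with
  | zero => simp
  | succ t ih =>
    rw [lower_pow_succ_raise_pow_succ e t hz, hc, ← sub_smul, map_smul, map_smul, ih, smul_smul,
      Finset.prod_range_succ, mul_comm]

end Spectrum

section Surjectivity

variable {K M ι : Type*} [Field K] [CharZero K] [AddCommGroup M] [Module K M] [Fintype ι]
  (e : Module.Basis ι K M)

theorem eq_zero_of_raise_lower_eq_zero {p q : ℕ} (h : q ≤ p) {w : TensorSq K M}
    (hw : w ∈ gradedPiece K M (p + 1) q) (h0 : raise e (lower e w) = 0) : w = 0 := by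
  -- `w` is an eigenvector of `lower e ∘ raise e`, so `F^(q+1) E^(q+1) w = 0` is a multiple of `w`.
  have hc : lower e (raise e w) = (-(((p + 1 : ℕ) : K) - q)) • w := by
    rw [neg_smul]
    exact eq_neg_of_add_eq_zero_left ((raise_lower e hw).symm.trans h0)
  have hprod := lower_pow_raise_pow_of_eq_smul e (q + 1) hw hc
  rw [raise_pow_eq_zero e q.lt_succ_self hw, map_zero, eq_comm] at hprod
  refine (smul_eq_zero.1 hprod).resolve_left (Finset.prod_ne_zero_iff.2 fun j _ => ?_)
  have hne : eig K p (q + 1) (j + 1) ≠ eig K p (q + 1) 0 :=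
    (eig_injective (by omega)).ne j.succ_ne_zero
  rw [eig_zero] at hne
  rwa [eig_succ_left, neg_sub_left, sub_add_cancel, neg_ne_zero]

theorem exists_raise_eq {p q : ℕ} (h : q ≤ p) {w : TensorSq K M}
    (hw : w ∈ gradedPiece K M (p + 1) q) : ∃ z ∈ gradedPiece K M p (q + 1), raise e z = w := by
  have : Module.Finite K M := .of_basis e
  have : Module.Finite K (gradedPiece K M (p + 1) q) := Module.Finite.range _
  let raiseLower : Module.End K (gradedPiece K M (p + 1) q) :=
    (raise e ∘ₗ lower e).restrict fun z hz => raise_mem e (lower_mem e hz)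
  have hinj : Function.Injective raiseLower :=
    (injective_iff_map_eq_zero _).2 fun z hz =>
      Subtype.ext (eq_zero_of_raise_lower_eq_zero e h z.2 (congrArg Subtype.val hz))
  obtain ⟨z, hz⟩ := LinearMap.injective_iff_surjective.1 hinj ⟨w, hw⟩
  exact ⟨lower e z, lower_mem e z.2, congrArg Subtype.val hz⟩

theorem exists_raise_pow_eq {a b : ℕ} (h : b ≤ a) {t : ℕ} (ht : t ≤ b) {w : TensorSq K M}
    (hw : w ∈ gradedPiece K M (a + t) (b - t)) :
    ∃ z ∈ gradedPiece K M a b, (raise e ^ t) z = w := by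
  induction t generalizing w with
  | zero => exact ⟨w, hw, rfl⟩
  | succ t ih =>
    obtain ⟨y, hy, rfl⟩ := exists_raise_eq e (p := a + t) (by omega) hw
    obtain ⟨z, hz, rfl⟩ := ih (by omega) (w := y) (by rwa [show b - t = b - (t + 1) + 1 by omega])
    exact ⟨z, hz, by rw [pow_succ', Module.End.mul_apply]⟩

end Surjectivity

section PolynomialsInEndomorphism

open Polynomial

variable {R W : Type*} [CommRing R] [AddCommGroup W] [Module R W] (T : Module.End R W)

theorem range_aeval_le_of_dvd {p d : R[X]} (h : d ∣ p) :
    LinearMap.range (aeval T p) ≤ LinearMap.range (aeval T d) := by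
  obtain ⟨r, rfl⟩ := h
  rw [map_mul]
  exact LinearMap.range_comp_le_range (aeval T r) (aeval T d)

theorem ker_aeval_le_range_aeval {p q : R[X]} (h : IsCoprime p q) :
    LinearMap.ker (aeval T p) ≤ LinearMap.range (aeval T q) := by
  intro x hx
  obtain ⟨u, v, huv⟩ := h
  refine ⟨aeval T v x, ?_⟩
  have hsum := LinearMap.congr_fun (congrArg (aeval T) huv) x
  rw [mul_comm v q] at hsum
  simpa [LinearMap.mem_ker.1 hx] using hsum

theorem range_aeval_mul {p q : R[X]} (h : IsCoprime p q) :
    LinearMap.range (aeval T (p * q)) =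
      LinearMap.range (aeval T p) ⊓ LinearMap.range (aeval T q) := by
  refine le_antisymm (le_inf (range_aeval_le_of_dvd T (dvd_mul_right p q))
    (range_aeval_le_of_dvd T (dvd_mul_left q p))) ?_
  rintro _ ⟨⟨y, rfl⟩, ⟨z, hz⟩⟩
  obtain ⟨u, v, huv⟩ := h
  refine ⟨aeval T u z + aeval T v y, ?_⟩
  calc aeval T (p * q) (aeval T u z + aeval T v y)
      = aeval T (u * p) (aeval T q z) + aeval T (v * q) (aeval T p y) := by
        simp only [map_add, ← Module.End.mul_apply, ← map_mul]
        congr 3 <;> ring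
    _ = aeval T p y := by rw [hz, ← LinearMap.add_apply, ← map_add, huv, aeval_one,
        Module.End.one_apply]

theorem range_aeval_prod {ι : Type*} (s : Finset ι) (p : ι → R[X])
    (h : (s : Set ι).Pairwise (Function.onFun IsCoprime p)) :
    LinearMap.range (aeval T (∏ j ∈ s, p j)) = ⨅ j ∈ s, LinearMap.range (aeval T (p j)) := by
  classical
  induction s using Finset.induction_on with
  | empty => simp [Module.End.one_eq_id]
  | insert k s hk ih =>
    rw [Finset.coe_insert] at h
    have hcop : IsCoprime (p k) (∏ j ∈ s, p j) := IsCoprime.prod_right fun j hj =>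
      h (Set.mem_insert k _) (Set.mem_insert_of_mem k hj) (ne_of_mem_of_not_mem hj hk).symm
    rw [Finset.prod_insert hk, range_aeval_mul T hcop, ih (h.mono (Set.subset_insert k _)),
      Finset.iInf_insert]

theorem range_aeval_eq_of_aeval_mul_eq_zero {p d r : R[X]} (hT : aeval T (d * r) = 0)
    (hd : d ∣ p) (hr : IsCoprime r p) :
    LinearMap.range (aeval T p) = LinearMap.range (aeval T d) := by
  refine le_antisymm (range_aeval_le_of_dvd T hd) ?_
  obtain ⟨u, v, huv⟩ := hr
  have heq := congrArg (aeval T)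
    (show d = u * (d * r) + p * (v * d) by linear_combination -d * huv)
  rw [map_add, map_mul, hT, mul_zero, zero_add] at heq
  rw [heq]
  exact range_aeval_le_of_dvd T (dvd_mul_right p _)

theorem range_aeval_eq_iInf_of_prod_eq_zero {K W ι : Type*} [Field K] [AddCommGroup W]
    [Module K W] (T : Module.End K W) {s : Finset ι} {μ : ι → K} (hμ : Function.Injective μ)
    (hT : aeval T (∏ j ∈ s, (X - C (μ j))) = 0) (p : K[X])
    [DecidablePred fun j => p.eval (μ j) = 0] :
    LinearMap.range (aeval T p) =
      ⨅ j ∈ s.filter fun j => p.eval (μ j) = 0, LinearMap.range (aeval T (X - C (μ j))) := by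
  have hcop (s : Finset ι) :
      (s : Set ι).Pairwise (Function.onFun IsCoprime fun j => X - C (μ j)) :=
    (pairwise_coprime_X_sub_C hμ).set_pairwise _
  rw [← range_aeval_prod T _ _ (hcop _)]
  rw [← Finset.prod_filter_mul_prod_filter_not s fun j => p.eval (μ j) = 0] at hT
  refine range_aeval_eq_of_aeval_mul_eq_zero T hT ?_ ?_
  · exact Finset.prod_dvd_of_coprime (hcop _) fun j hj =>
      dvd_iff_isRoot.2 (Finset.mem_filter.1 hj).2
  · exact IsCoprime.prod_left fun j hj =>
      (irreducible_X_sub_C _).coprime_iff_not_dvd.2 fun hdvd =>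
        (Finset.mem_filter.1 hj).2 (dvd_iff_isRoot.1 hdvd)

end PolynomialsInEndomorphism

section PhiOne

open Polynomial

variable {K : Type} [Field K] {n : ℕ}

/-- The polynomial whose value at `Φ_1` is `(t!)² Φ_t` on `Λ^a ⊗ Λ^b`. -/
def eigProd (R : Type*) [CommRing R] (a b t : ℕ) : R[X] :=
  ∏ s ∈ Finset.range t, (X - C (eig R a b s))

/-- The image of `Φ_1 - μ_j` on `Λ^a ⊗ Λ^b`; the corresponding cokernel is the Schur module
`L_{(a+j,b-j)}`. -/
def eigRange (mf : ∀ p q : ℕ, Lam K n p ⊗[K] Lam K n q →ₗ[K] Lam K n (p + q))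
    (Df : ∀ p q : ℕ, Lam K n (p + q) →ₗ[K] Lam K n p ⊗[K] Lam K n q) (a b j : ℕ) :
    Submodule K (Lam K n a ⊗[K] Lam K n b) :=
  LinearMap.range (aeval (R := K) (PhiMap' K n mf Df a b 1) (X - C (eig K a b j)))

theorem PhiMap'_eq_zero {mf : ∀ p q : ℕ, Lam K n p ⊗[K] Lam K n q →ₗ[K] Lam K n (p + q)}
    {Df : ∀ p q : ℕ, Lam K n (p + q) →ₗ[K] Lam K n p ⊗[K] Lam K n q} {a b t : ℕ} (h : b < t) :
    PhiMap' K n mf Df a b t = 0 :=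
  dif_neg fun ht => ht.2.not_gt h

variable [CharZero K] {mf : ∀ p q : ℕ, Lam K n p ⊗[K] Lam K n q →ₗ[K] Lam K n (p + q)}
  {Df : ∀ p q : ℕ, Lam K n (p + q) →ₗ[K] Lam K n p ⊗[K] Lam K n q}
  (hmf : ∀ p q, IsMulMap K n p q (mf p q)) (hDf : ∀ p q, IsComulMap K n p q (Df p q))
include hmf hDf

theorem factorial_sq_smul_incl_PhiMap' {ι : Type*} [Fintype ι] (e : Module.Basis ι K (V K n))
    {a b : ℕ} (hba : b ≤ a) (t : ℕ) (x : Lam K n a ⊗[K] Lam K n b) :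
    ((t.factorial : K) ^ 2) • incl K n a b (PhiMap' K n mf Df a b t x) =
      (lower e ^ t) ((raise e ^ t) (incl K n a b x)) := by
  rcases lt_or_ge b t with hbt | htb
  · rw [PhiMap'_eq_zero hbt, raise_pow_eq_zero e hbt (incl_mem x)]
    simp
  · rw [PhiMap', dif_pos ⟨htb.trans hba, htb⟩]
    exact factorial_sq_smul_incl_PhiMap e hmf hDf _ _ x

theorem incl_PhiMap'_one {ι : Type*} [Fintype ι] (e : Module.Basis ι K (V K n)) {a b : ℕ}
    (hba : b ≤ a) (x : Lam K n a ⊗[K] Lam K n b) :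
    incl K n a b (PhiMap' K n mf Df a b 1 x) = lower e (raise e (incl K n a b x)) := by
  simpa using factorial_sq_smul_incl_PhiMap' hmf hDf e hba 1 x

theorem aeval_PhiMap'_one_eigProd {a b : ℕ} (hba : b ≤ a) (t : ℕ) :
    aeval (R := K) (PhiMap' K n mf Df a b 1) (eigProd K a b t) =
      (t.factorial : K) ^ 2 • PhiMap' K n mf Df a b t := by
  refine LinearMap.ext fun x => incl_injective a b ?_
  rw [LinearMap.smul_apply, map_smul,
    factorial_sq_smul_incl_PhiMap' hmf hDf (Pi.basisFun K (Fin n)) hba]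
  induction t generalizing x with
  | zero => simp [eigProd]
  | succ t ih =>
    rw [lower_pow_succ_raise_pow_succ _ t (incl_mem x), ← incl_PhiMap'_one hmf hDf _ hba,
      ← map_smul, ← map_sub, ← ih, eigProd, eigProd, Finset.prod_range_succ, map_mul,
      Module.End.mul_apply]
    simp

theorem aeval_PhiMap'_one_eigProd_succ_eq_zero {a b : ℕ} (hba : b ≤ a) :
    aeval (R := K) (PhiMap' K n mf Df a b 1) (eigProd K a b (b + 1)) = 0 := by
  rw [aeval_PhiMap'_one_eigProd hmf hDf hba, PhiMap'_eq_zero b.lt_succ_self, smul_zero]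

theorem PhiMap'_one_deltaMap {a b t : ℕ} (hba : b ≤ a) (ht : t ≤ b)
    (x : Lam K n a ⊗[K] Lam K n b) :
    PhiMap' K n mf Df (a + t) (b - t) 1 (deltaMap K n mf Df a b t ht x) =
      deltaMap K n mf Df a b t ht
        (aeval (R := K) (PhiMap' K n mf Df a b 1) (X - C (eig K a b t)) x) := by
  let e := Pi.basisFun K (Fin n)
  have hne : (t.factorial : K) ≠ 0 := Nat.cast_ne_zero.2 t.factorial_ne_zero
  refine incl_injective _ _ (smul_right_injective _ hne ?_)
  calc (t.factorial : K) • incl K n _ _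
        (PhiMap' K n mf Df (a + t) (b - t) 1 (deltaMap K n mf Df a b t ht x))
      = lower e ((raise e ^ (t + 1)) (incl K n a b x)) := by
        rw [incl_PhiMap'_one hmf hDf e (by omega), ← map_smul, ← map_smul,
          factorial_smul_incl_deltaMap e hmf hDf, pow_succ', Module.End.mul_apply]
    _ = (raise e ^ t) (incl K n a b
          (aeval (R := K) (PhiMap' K n mf Df a b 1) (X - C (eig K a b t)) x)) := by
        rw [lower_raise_pow_succ e t (incl_mem x), ← incl_PhiMap'_one hmf hDf e hba]
        simp
    _ = _ := (factorial_smul_incl_deltaMap e hmf hDf ht _).symm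

theorem deltaMap_surjective {a b t : ℕ} (hba : b ≤ a) (ht : t ≤ b) :
    Function.Surjective (deltaMap K n mf Df a b t ht) := fun y => by
  obtain ⟨_, ⟨x, rfl⟩, h⟩ := exists_raise_pow_eq (Pi.basisFun K (Fin n)) hba ht (incl_mem y)
  have hne : (t.factorial : K) ≠ 0 := Nat.cast_ne_zero.2 t.factorial_ne_zero
  refine ⟨(t.factorial : K) • x, incl_injective _ _ (smul_right_injective _ hne ?_)⟩
  simp only [factorial_smul_incl_deltaMap (Pi.basisFun K (Fin n)) hmf hDf, map_smul, h]

theorem schurRel_eq_range {p q : ℕ} (hqp : q ≤ p) :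
    schurRel K n mf Df p q = LinearMap.range (PhiMap' K n mf Df p q 1) := by
  let e := Pi.basisFun K (Fin n)
  cases q with
  | zero => rw [schurRel, dif_neg (by omega), PhiMap'_eq_zero Nat.zero_lt_one, LinearMap.range_zero]
  | succ q =>
    rw [schurRel, dif_pos (by omega)]
    -- `δ_1` is onto the source of `θ_1`, so that `θ_1` and `θ_1 ∘ δ_1` have the same image.
    apply le_antisymm
    · rintro _ ⟨z, rfl⟩
      obtain ⟨_, ⟨y, rfl⟩, h⟩ := exists_raise_eq e (show q ≤ p by omega) (incl_mem z)
      refine ⟨y, incl_injective _ _ ?_⟩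
      rw [incl_PhiMap'_one hmf hDf e hqp, incl_theta1 e hmf hDf]
      exact congrArg _ h
    · rintro _ ⟨y, rfl⟩
      obtain ⟨z, hz⟩ := raise_mem e (incl_mem y)
      refine ⟨z, incl_injective _ _ ?_⟩
      rw [incl_PhiMap'_one hmf hDf e hqp, incl_theta1 e hmf hDf]
      exact congrArg _ hz

theorem ker_deltaMap_le {a b t : ℕ} (hba : b ≤ a) (ht : t ≤ b) :
    LinearMap.ker (deltaMap K n mf Df a b t ht) ≤ eigRange mf Df a b t := by
  have hcop : IsCoprime (eigProd K a b t) (X - C (eig K a b t)) :=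
    IsCoprime.prod_left fun s hs => pairwise_coprime_X_sub_C (eig_injective (by omega))
      (Finset.mem_range.1 hs).ne
  refine le_trans (fun x hx => ?_) (ker_aeval_le_range_aeval _ hcop)
  rw [LinearMap.mem_ker, aeval_PhiMap'_one_eigProd hmf hDf hba, LinearMap.smul_apply, PhiMap',
    dif_pos ⟨ht.trans hba, ht⟩, PhiMap, LinearMap.comp_apply, LinearMap.comp_apply,
    LinearMap.mem_ker.1 hx, map_zero, map_zero, smul_zero]

theorem deltaMap_mem_schurRel_iff {a b t : ℕ} (hba : b ≤ a) (ht : t ≤ b)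
    {x : Lam K n a ⊗[K] Lam K n b} :
    deltaMap K n mf Df a b t ht x ∈ schurRel K n mf Df (a + t) (b - t) ↔
      x ∈ eigRange mf Df a b t := by
  rw [schurRel_eq_range hmf hDf (by omega)]
  constructor
  · rintro ⟨y, hy⟩
    obtain ⟨z, rfl⟩ := deltaMap_surjective hmf hDf hba ht y
    rw [PhiMap'_one_deltaMap hmf hDf hba, eq_comm, ← sub_eq_zero, ← map_sub] at hy
    exact (Submodule.sub_mem_iff_left _ (LinearMap.mem_range_self _ z)).1
      (ker_deltaMap_le hmf hDf hba ht hy)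
  · rintro ⟨z, rfl⟩
    exact ⟨_, PhiMap'_one_deltaMap hmf hDf hba ht z⟩

end PhiOne

section PhiPoly

open Polynomial

variable {K : Type} [Field K]

/-- The polynomial whose value at `Φ_1` is `∑ a_t Φ_t` on `Λ^a ⊗ Λ^b`. -/
def phiPoly (coef : ℕ → K) (a b : ℕ) : K[X] :=
  ∑ t ∈ Finset.range (b + 1), C (coef t * ((t.factorial : K) ^ 2)⁻¹) * eigProd K a b t

variable [CharZero K] {n : ℕ}

theorem aeval_phiPoly {mf : ∀ p q : ℕ, Lam K n p ⊗[K] Lam K n q →ₗ[K] Lam K n (p + q)}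
    {Df : ∀ p q : ℕ, Lam K n (p + q) →ₗ[K] Lam K n p ⊗[K] Lam K n q}
    (hmf : ∀ p q, IsMulMap K n p q (mf p q)) (hDf : ∀ p q, IsComulMap K n p q (Df p q))
    {a b : ℕ} (hba : b ≤ a) (coef : ℕ → K) :
    aeval (R := K) (PhiMap' K n mf Df a b 1) (phiPoly coef a b) =
      ∑ t ∈ Finset.range (b + 1), coef t • PhiMap' K n mf Df a b t := by
  rw [phiPoly, map_sum]
  refine Finset.sum_congr rfl fun t _ => ?_
  have hne : (t.factorial : K) ^ 2 ≠ 0 := pow_ne_zero 2 (Nat.cast_ne_zero.2 t.factorial_ne_zero)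
  rw [map_mul, aeval_PhiMap'_one_eigProd hmf hDf hba, aeval_C, ← Algebra.smul_def, smul_smul,
    inv_mul_cancel_right₀ hne]

theorem eval_phiPoly {a b j : ℕ} (hba : b ≤ a) (hj : j ≤ b) (coef : ℕ → K) :
    (phiPoly coef a b).eval (eig K a b j) =
      ∑ t ∈ Finset.range (j + 1), coef t * (cCoef a b t j : K) := by
  have heval (t : ℕ) : (C (coef t * ((t.factorial : K) ^ 2)⁻¹) * eigProd K a b t).eval
      (eig K a b j) = coef t * (cCoef a b t j : K) := by
    have hne : (t.factorial : K) ^ 2 ≠ 0 := pow_ne_zero 2 (Nat.cast_ne_zero.2 t.factorial_ne_zero)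
    simp only [eigProd, eval_mul, eval_C, eval_prod, eval_sub, eval_X, prod_eig_sub_eig hba]
    rw [mul_assoc, inv_mul_cancel_left₀ hne]
  simp only [phiPoly, eval_finsetSum, heval]
  refine (Finset.sum_subset (Finset.range_subset_range.2 (by omega)) fun t _ ht => ?_).symm
  rw [Finset.mem_range, not_lt] at ht
  simp [cCoef, Nat.choose_eq_zero_of_lt (show j < t by omega)]

end PhiPoly

section Naturality

variable {R M ι : Type*} [CommRing R] [AddCommGroup M] [Module R M] [Fintype ι]
  (e : Module.Basis ι R M) (f : M →ₗ[R] M)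

/-- The endomorphism of the tensor square of the exterior algebra induced by `f`. -/
def mapSq : TensorSq R M →ₗ[R] TensorSq R M :=
  TensorProduct.map (ExteriorAlgebra.map f).toLinearMap (ExteriorAlgebra.map f).toLinearMap

@[simp] theorem mapSq_tmul (x y : ExteriorAlgebra R M) :
    mapSq f (x ⊗ₜ y) = ExteriorAlgebra.map f x ⊗ₜ ExteriorAlgebra.map f y := rfl

theorem exteriorAlgebra_hom_ext {A : Type*} [AddCommGroup A] [Module R A]
    {φ ψ : ExteriorAlgebra R M →ₗ[R] A}
    (h : ∀ p (v : Fin p → M), φ (ιMulti R p v) = ψ (ιMulti R p v)) : φ = ψ :=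
  LinearMap.ext_on_range (ExteriorAlgebra.ιMulti_span R M) fun v => h v.1 v.2

theorem map_reverse (x : ExteriorAlgebra R M) :
    ExteriorAlgebra.map f (reverse x) = reverse (ExteriorAlgebra.map f x) := by
  refine LinearMap.congr_fun (f := (ExteriorAlgebra.map f).toLinearMap ∘ₗ reverse)
    (g := reverse ∘ₗ (ExteriorAlgebra.map f).toLinearMap)
    (exteriorAlgebra_hom_ext fun p v => ?_) x
  simp [reverse_ιMulti, ExteriorAlgebra.map_apply_ιMulti, Function.comp_assoc]

theorem mapSq_raise (z : TensorSq R M) : mapSq f (raise e z) = raise e (mapSq f z) := by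
  refine LinearMap.congr_fun (f := mapSq f ∘ₗ raise e) (g := raise e ∘ₗ mapSq f)
    (TensorProduct.ext (LinearMap.ext fun x => exteriorAlgebra_hom_ext fun q u => ?_)) z
  cases q with
  | zero =>
    simp [-ExteriorAlgebra.ιMulti_zero_apply, raise_tmul_ιMulti_zero,
      ExteriorAlgebra.map_apply_ιMulti]
  | succ q =>
    simp [-ExteriorAlgebra.ιMulti_succ_apply, raise_tmul_ιMulti, ExteriorAlgebra.map_apply_ιMulti,
      Function.comp_assoc]

theorem mapSq_revSwap (z : TensorSq R M) : mapSq f (revSwap R M z) = revSwap R M (mapSq f z) := by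
  refine LinearMap.congr_fun (f := mapSq f ∘ₗ revSwap R M) (g := revSwap R M ∘ₗ mapSq f)
    (TensorProduct.ext' fun x y => ?_) z
  simp [map_reverse]

theorem mapSq_lower (z : TensorSq R M) : mapSq f (lower e z) = lower e (mapSq f z) := by
  obtain ⟨w, rfl⟩ := (revSwap_involutive (R := R) (M := M)).surjective z
  rw [← (revSwap_semiconj_raise_lower e).eq, mapSq_revSwap, mapSq_raise, mapSq_revSwap,
    (revSwap_semiconj_raise_lower e).eq]

end Naturality

section Equivariance

variable {K : Type} [Field K] {n : ℕ} {rho : ∀ p : ℕ, GLn K n → (Lam K n p →ₗ[K] Lam K n p)}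
  (hrho : IsExtAction K n rho)
include hrho

theorem incl_rhoT {p q : ℕ} (g : GLn K n) (x : Lam K n p ⊗[K] Lam K n q) :
    incl K n p q (rhoT K n rho p q g x) =
      mapSq (Matrix.toLin' (g : Matrix (Fin n) (Fin n) K)) (incl K n p q x) := by
  refine LinearMap.congr_fun (f := incl K n p q ∘ₗ rhoT K n rho p q g)
    (g := mapSq _ ∘ₗ incl K n p q)
    (TensorProduct.ext (lam_hom_ext fun u => lam_hom_ext fun v => ?_)) x
  simp [rhoT, hrho p g u, hrho q g v, ExteriorAlgebra.map_apply_ιMulti, Function.comp_def]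

variable [CharZero K] {mf : ∀ p q : ℕ, Lam K n p ⊗[K] Lam K n q →ₗ[K] Lam K n (p + q)}
  {Df : ∀ p q : ℕ, Lam K n (p + q) →ₗ[K] Lam K n p ⊗[K] Lam K n q}
  (hmf : ∀ p q, IsMulMap K n p q (mf p q)) (hDf : ∀ p q, IsComulMap K n p q (Df p q))
include hmf hDf

theorem rhoT_deltaMap {a b t : ℕ} (ht : t ≤ b) (g : GLn K n) (x : Lam K n a ⊗[K] Lam K n b) :
    rhoT K n rho (a + t) (b - t) g (deltaMap K n mf Df a b t ht x) =
      deltaMap K n mf Df a b t ht (rhoT K n rho a b g x) := by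
  let e := Pi.basisFun K (Fin n)
  have hne : (t.factorial : K) ≠ 0 := Nat.cast_ne_zero.2 t.factorial_ne_zero
  refine incl_injective _ _ (smul_right_injective _ hne ?_)
  have hcomm := (show Commute (mapSq (Matrix.toLin' (g : Matrix (Fin n) (Fin n) K))) (raise e) from
    LinearMap.ext (mapSq_raise e _)).pow_right t
  simp only [incl_rhoT hrho, ← map_smul, factorial_smul_incl_deltaMap e hmf hDf]
  exact LinearMap.congr_fun hcomm.eq _

theorem rhoT_mem_schurRel {p q : ℕ} (hqp : q ≤ p) (g : GLn K n) {x : Lam K n p ⊗[K] Lam K n q}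
    (hx : x ∈ schurRel K n mf Df p q) : rhoT K n rho p q g x ∈ schurRel K n mf Df p q := by
  let e := Pi.basisFun K (Fin n)
  rw [schurRel_eq_range hmf hDf hqp] at hx ⊢
  obtain ⟨y, rfl⟩ := hx
  refine ⟨rhoT K n rho p q g y, incl_injective _ _ ?_⟩
  simp only [incl_rhoT hrho, incl_PhiMap'_one hmf hDf e hqp, mapSq_lower, mapSq_raise]

end Equivariance

section FixedVectors

section Ring

variable {R W : Type*} [Ring R] [AddCommGroup W] [Module R W]

/-- The endomorphism of `W ⧸ N` induced by `f` has no nonzero fixed vector. -/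
def QuotFixedPointFree (f : Module.End R W) (N : Submodule R W) : Prop :=
  ∀ x, f x - x ∈ N → x ∈ N

theorem QuotFixedPointFree.iInf₂ {ι : Type*} {f : Module.End R W} {s : Finset ι}
    {N : ι → Submodule R W} (h : ∀ j ∈ s, QuotFixedPointFree f (N j)) :
    QuotFixedPointFree f (⨅ j ∈ s, N j) := by
  intro x hx
  simp only [Submodule.mem_iInf] at hx ⊢
  exact fun j hj => h j hj x (hx j hj)

end Ring

variable {K W : Type*} [Field K] [AddCommGroup W] [Module K W] [Module.Finite K W]
  {f : Module.End K W} {N N' : Submodule K W}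

theorem quotFixedPointFree_iff_sup_range_eq_top (hN : ∀ x ∈ N, f x ∈ N) :
    QuotFixedPointFree f N ↔ N ⊔ LinearMap.range (f - 1) = ⊤ := by
  have hsub : N ≤ N.comap (f - 1) := fun x hx => sub_mem (hN x hx) hx
  calc QuotFixedPointFree f N
      ↔ N.comap (f - 1) ≤ N := Iff.rfl
    _ ↔ Function.Injective (N.mapQ N (f - 1) hsub) := by
      rw [← LinearMap.ker_eq_bot, Submodule.ker_mapQ, ← LinearMap.le_ker_iff_map, Submodule.ker_mkQ]
    _ ↔ Function.Surjective (N.mapQ N (f - 1) hsub) := LinearMap.injective_iff_surjective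
    _ ↔ N ⊔ LinearMap.range (f - 1) = ⊤ := by
      rw [← LinearMap.range_eq_top, Submodule.range_mapQ, Submodule.map_mkQ_eq_top, sup_comm]

-- In finite dimension it is equivalent that `f - 1` is onto, which is inherited by quotients.
theorem QuotFixedPointFree.mono (h : QuotFixedPointFree f N) (hN : ∀ x ∈ N, f x ∈ N)
    (hN' : ∀ x ∈ N', f x ∈ N') (hle : N ≤ N') : QuotFixedPointFree f N' := by
  rw [quotFixedPointFree_iff_sup_range_eq_top hN] at h
  rw [quotFixedPointFree_iff_sup_range_eq_top hN', eq_top_iff, ← h]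
  exact sup_le_sup_right hle _

end FixedVectors

namespace IsQuotIso

variable {K : Type} [Field K] {G' M₁ M₂ : Type} [AddCommGroup M₁] [Module K M₁]
  [AddCommGroup M₂] [Module K M₂] {N₁ : Submodule K M₁} {N₂ : Submodule K M₂}
  {ρ₁ : G' → M₁ →ₗ[K] M₁} {ρ₂ : G' → M₂ →ₗ[K] M₂}

theorem of_surjective (f : M₁ →ₗ[K] M₂) (hf : Function.Surjective f)
    (hN : ∀ x, f x ∈ N₂ ↔ x ∈ N₁) (hρ : ∀ g x, ρ₂ g (f x) = f (ρ₁ g x))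
    (hN₂ : ∀ g, ∀ y ∈ N₂, ρ₂ g y ∈ N₂) : IsQuotIso K N₁ N₂ ρ₁ ρ₂ := by
  have hker : N₁ = LinearMap.ker (N₂.mkQ ∘ₗ f) := by
    ext x
    simp [hN]
  refine ⟨(Submodule.quotEquivOfEq _ _ hker).trans
    ((N₂.mkQ ∘ₗ f).quotKerEquivOfSurjective (N₂.mkQ_surjective.comp hf)), fun g x y hxy => ?_⟩
  change Submodule.Quotient.mk (f x) = Submodule.Quotient.mk y at hxy
  change Submodule.Quotient.mk (f (ρ₁ g x)) = Submodule.Quotient.mk (ρ₂ g y)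
  rw [Submodule.Quotient.eq] at hxy ⊢
  rw [← hρ, ← map_sub]
  exact hN₂ g _ hxy

protected theorem symm (h : IsQuotIso K N₁ N₂ ρ₁ ρ₂) : IsQuotIso K N₂ N₁ ρ₂ ρ₁ := by
  obtain ⟨φ, hφ⟩ := h
  refine ⟨φ.symm, fun g y x hyx => ?_⟩
  rw [LinearEquiv.symm_apply_eq] at hyx ⊢
  exact (hφ g x y hyx.symm).symm

theorem apply_mem (h : IsQuotIso K N₁ N₂ ρ₁ ρ₂) (g : G') : ∀ x ∈ N₁, ρ₁ g x ∈ N₁ := by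
  intro x hx
  obtain ⟨φ, hφ⟩ := h
  have hzero := hφ g x 0 (by rw [(Submodule.Quotient.mk_eq_zero N₁).2 hx, map_zero]; rfl)
  rw [map_zero, Submodule.Quotient.mk_zero, map_eq_zero_iff φ φ.injective] at hzero
  exact (Submodule.Quotient.mk_eq_zero N₁).1 hzero

theorem quotFixedPointFree (h : IsQuotIso K N₁ N₂ ρ₁ ρ₂) {g : G'}
    (hfree : QuotFixedPointFree (ρ₁ g) N₁) : QuotFixedPointFree (ρ₂ g) N₂ := by
  intro y hy
  obtain ⟨φ, hφ⟩ := h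
  obtain ⟨x, hx⟩ := Submodule.Quotient.mk_surjective N₁ (φ.symm (Submodule.Quotient.mk y))
  rw [LinearEquiv.eq_symm_apply] at hx
  have hfix : φ (Submodule.Quotient.mk (ρ₁ g x)) = φ (Submodule.Quotient.mk x) := by
    rw [hφ g x y hx, hx, Submodule.Quotient.eq]
    exact hy
  rw [φ.injective.eq_iff, Submodule.Quotient.eq] at hfix
  rwa [(Submodule.Quotient.mk_eq_zero N₁).2 (hfree x hfix), map_zero, eq_comm,
    Submodule.Quotient.mk_eq_zero] at hx

theorem finrank_eq [Module.Finite K M₁] {N : Submodule K M₁} (h : IsQuotIso K N₁ N₂ ρ₁ ρ₂)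
    (h' : IsQuotIso K N N₂ ρ₁ ρ₂) : Module.finrank K N₁ = Module.finrank K N := by
  have hquot := h.choose.finrank_eq.trans h'.choose.finrank_eq.symm
  have hN₁ := N₁.finrank_quotient_add_finrank
  have hN := N.finrank_quotient_add_finrank
  omega

end IsQuotIso

section Torus

theorem tmul_ne_zero {K A B : Type*} [Field K] [AddCommGroup A] [Module K A] [AddCommGroup B]
    [Module K B] {x : A} {y : B} (hx : x ≠ 0) (hy : y ≠ 0) : x ⊗ₜ[K] y ≠ 0 := by
  obtain ⟨f, hf⟩ := Module.Projective.exists_dual_ne_zero K hx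
  obtain ⟨g, hg⟩ := Module.Projective.exists_dual_ne_zero K hy
  intro h
  have hfg := congrArg (TensorProduct.lid K K ∘ TensorProduct.map f g) h
  simp only [Function.comp_apply, TensorProduct.map_tmul, TensorProduct.lid_tmul, map_zero,
    smul_eq_mul] at hfg
  exact mul_ne_zero hf hg hfg

variable {K : Type} [Field K] {n : ℕ}

/-- The wedge of the standard basis vectors with indices `v 0, …, v (p - 1)`. -/
def basisWedge (K : Type) [Field K] {n p : ℕ} (v : Fin p → Fin n) : Lam K n p :=
  wedge K n fun j => Pi.single (v j) 1

theorem basisWedge_ne_zero {p : ℕ} (v : Fin p ↪o Fin n) : basisWedge K v ≠ 0 := by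
  have h := (exteriorPower.ιMulti_family_linearIndependent_ofBasis K p
    (Pi.basisFun K (Fin n))).ne_zero (Set.powersetCard.ofFinEmbEquiv v)
  rw [exteriorPower.ιMulti_family, Equiv.symm_apply_apply] at h
  convert h using 1
  refine Subtype.ext ?_
  simp only [basisWedge, coe_wedge, exteriorPower.ιMulti_apply_coe]
  congr 1
  funext j
  exact (Pi.basisFun_apply K (Fin n) (v j)).symm

theorem raise_basisWedge_castLE {ι : Type*} [Fintype ι] (e : Module.Basis ι K (V K n)) {p q : ℕ}
    (hq : q ≤ p) (hp : p ≤ n) :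
    raise e (incl K n p q
      (basisWedge K (Fin.castLE hp) ⊗ₜ basisWedge K (Fin.castLE (hq.trans hp)))) = 0 := by
  cases q with
  | zero => exact raise_eq_zero e (incl_mem _)
  | succ q =>
    change raise e (ExteriorAlgebra.ιMulti K p _ ⊗ₜ ExteriorAlgebra.ιMulti K (q + 1) _) = 0
    rw [raise_tmul_ιMulti]
    refine Finset.sum_eq_zero fun j _ => ?_
    have hrepeat : Fin.snoc (α := fun _ => V K n)
        (fun k => (Pi.single (Fin.castLE hp k) 1 : V K n))
        (Pi.single (Fin.castLE (hq.trans hp) j) 1) (Fin.castSucc (Fin.castLE hq j)) =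
        Fin.snoc (α := fun _ => V K n)
        (fun k => (Pi.single (Fin.castLE hp k) 1 : V K n))
        (Pi.single (Fin.castLE (hq.trans hp) j) 1) (Fin.last p) := by
      rw [Fin.snoc_castSucc, Fin.snoc_last]
      rfl
    rw [ιMulti_mul_ι, AlternatingMap.map_eq_zero_of_eq _ _ hrepeat (Fin.castSucc_lt_last _).ne,
      TensorProduct.zero_tmul, smul_zero]

theorem basisWedge_tmul_ext {p q : ℕ} {A : Type*} [AddCommGroup A] [Module K A]
    {f g : Lam K n p ⊗[K] Lam K n q →ₗ[K] A}
    (h : ∀ (v : Fin p → Fin n) (w : Fin q → Fin n), Function.Injective v →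
      f (basisWedge K v ⊗ₜ basisWedge K w) = g (basisWedge K v ⊗ₜ basisWedge K w)) : f = g := by
  have hext {p : ℕ} {A : Type _} [AddCommGroup A] [Module K A] {f g : Lam K n p →ₗ[K] A}
      (h : ∀ v : Fin p → Fin n, Function.Injective v → f (basisWedge K v) = g (basisWedge K v)) :
      f = g :=
    exteriorPower.linearMap_ext ((Pi.basisFun K (Fin n)).ext_alternating fun v hv => by
      simp only [Pi.basisFun_apply]
      exact h v hv)
  exact TensorProduct.ext (hext fun v hv => hext fun w _ => h v w hv)

variable (K n) in
/-- The diagonal matrix with the first `r` entries equal to `1` and the others equal to `2`. It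
fixes a nonzero vector of `L_{(p,q)}` if `r = p` and none if `r < p`, so that these matrices tell
the Schur modules apart. -/
def torusElt [CharZero K] (r : ℕ) : GLn K n :=
  Matrix.GeneralLinearGroup.mkOfDetNeZero
    (Matrix.diagonal fun k : Fin n => if r ≤ (k : ℕ) then (2 : K) else 1) (by
      rw [Matrix.det_diagonal, Finset.prod_ne_zero_iff]
      intro k _
      split_ifs
      · exact two_ne_zero
      · exact one_ne_zero)

variable [CharZero K] {rho : ∀ p : ℕ, GLn K n → (Lam K n p →ₗ[K] Lam K n p)}

theorem rho_torusElt (hrho : IsExtAction K n rho) (r : ℕ) {p : ℕ} (v : Fin p → Fin n) :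
    rho p (torusElt K n r) (basisWedge K v) =
      (2 : K) ^ (Finset.univ.filter fun j => r ≤ (v j : ℕ)).card • basisWedge K v := by
  have hdiag (j : Fin p) : Matrix.toLin' (torusElt K n r : Matrix (Fin n) (Fin n) K)
      (Pi.single (v j) 1 : V K n) =
      (if r ≤ (v j : ℕ) then (2 : K) else 1) • (Pi.single (v j) 1 : V K n) := by
    change Matrix.toLin' (Matrix.diagonal _) _ = _
    split_ifs with h <;> simp [h, ← Pi.single_smul]
  rw [basisWedge, hrho]
  simp only [hdiag]
  refine Subtype.ext ?_
  rw [coe_wedge, Submodule.coe_smul, coe_wedge, AlternatingMap.map_smul_univ, Finset.prod_ite]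
  simp

theorem rhoT_torusElt (hrho : IsExtAction K n rho) (r : ℕ) {p q : ℕ} (v : Fin p → Fin n)
    (w : Fin q → Fin n) :
    rhoT K n rho p q (torusElt K n r) (basisWedge K v ⊗ₜ basisWedge K w) =
      (2 : K) ^ ((Finset.univ.filter fun j => r ≤ (v j : ℕ)).card +
        (Finset.univ.filter fun j => r ≤ (w j : ℕ)).card) •
        (basisWedge K v ⊗ₜ[K] basisWedge K w) := by
  rw [rhoT, TensorProduct.map_tmul, rho_torusElt hrho, rho_torusElt hrho,
    TensorProduct.smul_tmul_smul, pow_add]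

theorem card_filter_le_pos {p r : ℕ} {v : Fin p → Fin n} (hv : Function.Injective v) (hr : r < p) :
    0 < (Finset.univ.filter fun j => r ≤ (v j : ℕ)).card := by
  rw [Finset.card_pos]
  by_contra! hempty
  have hlt (j : Fin p) : (v j : ℕ) < r :=
    not_le.1 (Finset.filter_eq_empty_iff.1 hempty (Finset.mem_univ j))
  have hcard := Fintype.card_le_of_injective (fun j => (⟨v j, hlt j⟩ : Fin r))
    fun j k hjk => hv (Fin.ext (Fin.mk.inj_iff.1 hjk))
  simp only [Fintype.card_fin] at hcard
  omega

theorem range_rhoT_torusElt_sub_one (hrho : IsExtAction K n rho) {r p q : ℕ} (hr : r < p) :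
    LinearMap.range (rhoT K n rho p q (torusElt K n r) - 1) = ⊤ := by
  rw [← Submodule.ker_mkQ (LinearMap.range _), LinearMap.ker_eq_top]
  refine basisWedge_tmul_ext fun v w hv => ?_
  have hne : (2 : K) ^ ((Finset.univ.filter fun j => r ≤ (v j : ℕ)).card +
      (Finset.univ.filter fun j => r ≤ (w j : ℕ)).card) - 1 ≠ 0 := by
    have hpos := card_filter_le_pos hv hr
    rw [sub_ne_zero]
    exact_mod_cast (Nat.one_lt_two_pow (by omega)).ne'
  rw [LinearMap.zero_apply, Submodule.mkQ_apply, Submodule.Quotient.mk_eq_zero,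
    ← Submodule.smul_mem_iff _ hne]
  refine ⟨basisWedge K v ⊗ₜ basisWedge K w, ?_⟩
  rw [LinearMap.sub_apply, rhoT_torusElt hrho, Module.End.one_apply, sub_smul, one_smul]

variable {mf : ∀ p q : ℕ, Lam K n p ⊗[K] Lam K n q →ₗ[K] Lam K n (p + q)}
  {Df : ∀ p q : ℕ, Lam K n (p + q) →ₗ[K] Lam K n p ⊗[K] Lam K n q}
  (hmf : ∀ p q, IsMulMap K n p q (mf p q)) (hDf : ∀ p q, IsComulMap K n p q (Df p q))

include hmf hDf in
theorem basisWedge_castLE_notMem_schurRel {p q : ℕ} (hq : q ≤ p) (hp : p ≤ n) :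
    basisWedge K (Fin.castLE hp) ⊗ₜ[K] basisWedge K (Fin.castLE (hq.trans hp)) ∉
      schurRel K n mf Df p q := by
  let e := Pi.basisFun K (Fin n)
  rw [schurRel_eq_range hmf hDf hq]
  rintro ⟨y, hy⟩
  -- The vector is killed by `raise e`; being `lower e (raise e y)`, it forces `raise e y = 0`.
  have hlr : lower e (raise e (incl K n p q y)) = incl K n p q
      (basisWedge K (Fin.castLE hp) ⊗ₜ[K] basisWedge K (Fin.castLE (hq.trans hp))) := by
    rw [← hy, incl_PhiMap'_one hmf hDf e hq]
  have hraise : raise e (incl K n p q y) = 0 := by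
    cases q with
    | zero => exact raise_eq_zero e (incl_mem y)
    | succ q =>
      refine eq_zero_of_raise_lower_eq_zero e (by omega) (raise_mem e (incl_mem y)) ?_
      rw [hlr, raise_basisWedge_castLE e hq hp]
  rw [hraise, map_zero] at hlr
  exact tmul_ne_zero (basisWedge_ne_zero (Fin.castLEOrderEmb hp))
    (basisWedge_ne_zero (Fin.castLEOrderEmb (hq.trans hp)))
    (incl_injective p q (hlr.symm.trans (map_zero _).symm))

variable (hrho : IsExtAction K n rho)
include hmf hDf hrho

theorem quotFixedPointFree_schurRel {r p q : ℕ} (hq : q ≤ p) (hr : r < p) :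
    QuotFixedPointFree (rhoT K n rho p q (torusElt K n r)) (schurRel K n mf Df p q) := by
  rw [quotFixedPointFree_iff_sup_range_eq_top fun _ => rhoT_mem_schurRel hrho hmf hDf hq _,
    range_rhoT_torusElt_sub_one hrho hr, sup_top_eq]

theorem not_quotFixedPointFree_schurRel {p q : ℕ} (hq : q ≤ p) (hp : p ≤ n) :
    ¬ QuotFixedPointFree (rhoT K n rho p q (torusElt K n p)) (schurRel K n mf Df p q) := by
  intro hfree
  have hcard {m : ℕ} (hm : m ≤ n) (hmp : m ≤ p) :
      (Finset.univ.filter fun j : Fin m => p ≤ (Fin.castLE hm j : ℕ)).card = 0 := by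
    rw [Finset.card_eq_zero, Finset.filter_eq_empty_iff]
    exact fun j _ => not_le.2 (j.isLt.trans_le hmp)
  refine basisWedge_castLE_notMem_schurRel hmf hDf hq hp (hfree _ ?_)
  rw [rhoT_torusElt hrho, hcard hp le_rfl, hcard _ hq, pow_zero, one_smul, sub_self]
  exact zero_mem _

end Torus

section Classification

open Polynomial

variable {K : Type} [Field K] [CharZero K] {n : ℕ}
  {mf : ∀ p q : ℕ, Lam K n p ⊗[K] Lam K n q →ₗ[K] Lam K n (p + q)}
  {Df : ∀ p q : ℕ, Lam K n (p + q) →ₗ[K] Lam K n p ⊗[K] Lam K n q}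

theorem eigRange_sup_eigRange {a b i j : ℕ} (hba : b ≤ a) (hij : i ≠ j) :
    eigRange mf Df a b i ⊔ eigRange mf Df a b j = ⊤ :=
  sup_aeval_range_eq_top_of_isCoprime _
    (pairwise_coprime_X_sub_C (eig_injective (hba.trans a.le_succ)) hij)

variable {rho : ∀ p : ℕ, GLn K n → (Lam K n p →ₗ[K] Lam K n p)}
  (hmf : ∀ p q, IsMulMap K n p q (mf p q)) (hDf : ∀ p q, IsComulMap K n p q (Df p q))
  (hrho : IsExtAction K n rho) {a b : ℕ} (hba : b ≤ a)
include hmf hDf hrho hba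

theorem isQuotIso_eigRange {j : ℕ} (hj : j ≤ b) :
    IsQuotIso K (eigRange mf Df a b j) (schurRel K n mf Df (a + j) (b - j))
      (rhoT K n rho a b) (rhoT K n rho (a + j) (b - j)) :=
  .of_surjective (deltaMap K n mf Df a b j hj) (deltaMap_surjective hmf hDf hba hj)
    (fun _ => deltaMap_mem_schurRel_iff hmf hDf hba hj)
    (fun g => rhoT_deltaMap hrho hmf hDf hj g)
    (fun g _ => rhoT_mem_schurRel hrho hmf hDf (by omega) g)

theorem quotFixedPointFree_eigRange {j r : ℕ} (hj : j ≤ b) (hr : r < a + j) :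
    QuotFixedPointFree (rhoT K n rho a b (torusElt K n r)) (eigRange mf Df a b j) :=
  (isQuotIso_eigRange hmf hDf hrho hba hj).symm.quotFixedPointFree
    (quotFixedPointFree_schurRel hmf hDf hrho (by omega) hr)

variable (hn : a + b ≤ n)
include hn

theorem not_quotFixedPointFree_eigRange {j : ℕ} (hj : j ≤ b) :
    ¬ QuotFixedPointFree (rhoT K n rho a b (torusElt K n (a + j))) (eigRange mf Df a b j) :=
  fun hfree => not_quotFixedPointFree_schurRel hmf hDf hrho (by omega) (by omega)
    ((isQuotIso_eigRange hmf hDf hrho hba hj).quotFixedPointFree hfree)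

theorem eigRange_ne_top {j : ℕ} (hj : j ≤ b) : eigRange mf Df a b j ≠ ⊤ := fun htop =>
  not_quotFixedPointFree_eigRange hmf hDf hrho hba hn hj fun _ _ => htop ▸ Submodule.mem_top

variable {s : Finset ℕ} (hs : ∀ j ∈ s, j ≤ b) {i : ℕ} (hi : i ≤ b)
include hs

section Forward

variable (h : IsQuotIso K (⨅ j ∈ s, eigRange mf Df a b j) (schurRel K n mf Df (a + i) (b - i))
  (rhoT K n rho a b) (rhoT K n rho (a + i) (b - i)))
include h

theorem le_of_isQuotIso_iInf_eigRange {j : ℕ} (hj : j ∈ s) : i ≤ j := by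
  by_contra! hji
  -- The cokernel maps onto `L_(a+j,b-j)`, in which the matrix fixes a nonzero vector.
  have hfree := h.symm.quotFixedPointFree
    (quotFixedPointFree_schurRel hmf hDf hrho (by omega) (Nat.add_lt_add_left hji a))
  exact not_quotFixedPointFree_eigRange hmf hDf hrho hba hn (hs j hj) <|
    hfree.mono (h.apply_mem _) ((isQuotIso_eigRange hmf hDf hrho hba (hs j hj)).apply_mem _)
      (iInf₂_le j hj)

include hi

theorem mem_of_isQuotIso_iInf_eigRange : i ∈ s := by
  by_contra hmem
  refine not_quotFixedPointFree_schurRel hmf hDf hrho (p := a + i) (q := b - i) (by omega)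
    (by omega) (h.quotFixedPointFree (.iInf₂ fun j hj => ?_))
  have hij : i < j := (le_of_isQuotIso_iInf_eigRange hmf hDf hrho hba hn hs h hj).lt_of_ne
    fun hij => hmem (hij ▸ hj)
  exact quotFixedPointFree_eigRange hmf hDf hrho hba (hs j hj) (Nat.add_lt_add_left hij a)

theorem eq_singleton_of_isQuotIso_iInf_eigRange : s = {i} := by
  have hmem : i ∈ s := mem_of_isQuotIso_iInf_eigRange hmf hDf hrho hba hn hs hi h
  have heq : ⨅ j ∈ s, eigRange mf Df a b j = eigRange mf Df a b i :=
    Submodule.eq_of_le_of_finrank_eq (iInf₂_le i hmem)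
      (h.finrank_eq (isQuotIso_eigRange hmf hDf hrho hba hi))
  refine Finset.eq_singleton_iff_unique_mem.2 ⟨hmem, fun j hj => ?_⟩
  by_contra hji
  refine eigRange_ne_top hmf hDf hrho hba hn (hs j hj) ?_
  rw [← eigRange_sup_eigRange hba hji, left_eq_sup, ← heq]
  exact iInf₂_le j hj

end Forward

include hi

theorem isQuotIso_iInf_eigRange_iff :
    IsQuotIso K (⨅ j ∈ s, eigRange mf Df a b j) (schurRel K n mf Df (a + i) (b - i))
      (rhoT K n rho a b) (rhoT K n rho (a + i) (b - i)) ↔ s = {i} := by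
  refine ⟨eq_singleton_of_isQuotIso_iInf_eigRange hmf hDf hrho hba hn hs hi, ?_⟩
  rintro rfl
  rw [Finset.iInf_singleton]
  exact isQuotIso_eigRange hmf hDf hrho hba hi

end Classification

/-- Theorem 3.4 of the paper: for `a ≥ b`, `n ≥ a+b`, `Φ = Σ_{t=0}^{b} a_t Φ_t` and
`0 ≤ i ≤ b`, `coker Φ ≅ L_{(a+i,b−i)}` as `G`-modules iff `Σ_{t=0}^{i} a_t c_t(a,b,i) = 0`
and `Σ_{t=0}^{j} a_t c_t(a,b,j) ≠ 0` for all `j ∈ {0,…,b} \ {i}`. -/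
theorem statement0 (K : Type) [Field K] [CharZero K] (n : ℕ) (hn1 : 1 ≤ n)
    (a b : ℕ) (hba : b ≤ a) (hn : a + b ≤ n)
    (mf : ∀ p q : ℕ, Lam K n p ⊗[K] Lam K n q →ₗ[K] Lam K n (p+q))
    (Df : ∀ p q : ℕ, Lam K n (p+q) →ₗ[K] Lam K n p ⊗[K] Lam K n q)
    (hmf : ∀ p q, IsMulMap K n p q (mf p q))
    (hDf : ∀ p q, IsComulMap K n p q (Df p q))
    (rho : ∀ p : ℕ, GLn K n → (Lam K n p →ₗ[K] Lam K n p))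
    (hrho : IsExtAction K n rho)
    (coef : ℕ → K) (i : ℕ) (hi : i ≤ b) :
    IsQuotIso K
        (LinearMap.range (∑ t ∈ Finset.range (b+1), coef t • PhiMap' K n mf Df a b t))
        (schurRel K n mf Df (a+i) (b-i))
        (rhoT K n rho a b) (rhoT K n rho (a+i) (b-i)) ↔
      ((∑ t ∈ Finset.range (i+1), coef t * (cCoef a b t i : K)) = 0 ∧
        ∀ j : ℕ, j ≤ b → j ≠ i →
          (∑ t ∈ Finset.range (j+1), coef t * (cCoef a b t j : K)) ≠ 0) := by
  classical
  have hrange : LinearMap.range (∑ t ∈ Finset.range (b + 1), coef t • PhiMap' K n mf Df a b t) =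
      ⨅ j ∈ (Finset.range (b + 1)).filter fun j => (phiPoly coef a b).eval (eig K a b j) = 0,
        eigRange mf Df a b j := by
    rw [← aeval_phiPoly hmf hDf hba]
    exact range_aeval_eq_iInf_of_prod_eq_zero _ (eig_injective (hba.trans a.le_succ))
      (aeval_PhiMap'_one_eigProd_succ_eq_zero hmf hDf hba) _
  have hle : ∀ j ∈ (Finset.range (b + 1)).filter fun j =>
      (phiPoly coef a b).eval (eig K a b j) = 0, j ≤ b :=
    fun j hj => Finset.mem_range_succ_iff.1 (Finset.mem_filter.1 hj).1
  rw [hrange, isQuotIso_iInf_eigRange_iff hmf hDf hrho hba hn hle hi, ← eval_phiPoly hba hi,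
    Finset.eq_singleton_iff_unique_mem, Finset.mem_filter, Finset.mem_range_succ_iff,
    and_iff_right hi]
  refine and_congr_right fun _ => forall_congr' fun j => ?_
  rw [Finset.mem_filter, Finset.mem_range_succ_iff, and_imp]
  refine forall_congr' fun hj => ?_
  rw [← eval_phiPoly hba hj]
  exact not_imp_not.symm

end MMS
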